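/- arXiv:2201.05693 — 14 statements merged into one kernel-verified Lean document; each statement's English description precedes it below -/
import Mathlib

section
/- The polynomial identity P^D_{n0−1}·P_{n0−1} − P^D_{n0−2}·P_{n0} = a(n0)·a(1)·( ∏_{i=2}^{n0−1} a(i) )² holds (with the empty product equal to 1 when n0 = 2). -/
open Polynomial

theorem statement_3 (n0 : ℕ) (hn0 : 2 ≤ n0) (a b : ℕ → ℝ)
    (ha : ∀ i, 1 ≤ i → i ≤ n0 → a i ≠ 0)
    (hb : ∀ j, j ≤ n0 → b j = b (n0 - j))
    (P : ℕ → Polynomial ℝ)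
    (hP0 : P 0 = 1) (hP1 : P 1 = X - C (b 0))
    (hP : ∀ k, 2 ≤ k → k ≤ n0 + 1 →
      P k = (X - C (b (k - 1))) * P (k - 1) - C (a (k - 1) * a (n0 + 2 - k)) * P (k - 2))
    (PD : ℕ → Polynomial ℝ)
    (hPD0 : PD 0 = 1) (hPD1 : PD 1 = X - C (b 1))
    (hPD : ∀ k, 2 ≤ k → k ≤ n0 - 1 →
      PD k = (X - C (b k)) * PD (k - 1) - C (a k * a (n0 + 1 - k)) * PD (k - 2)) :
    PD (n0 - 1) * P (n0 - 1) - PD (n0 - 2) * P n0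
      = C (a n0 * a 1 * (∏ i ∈ Finset.Icc 2 (n0 - 1), a i) ^ 2) := by
  have key : ∀ k, k + 2 ≤ n0 → PD (k+1) * P (k+1) - PD k * P (k+2)
      = C (∏ j ∈ Finset.range (k+1), (a (j+1) * a (n0 - j))) := by
    intro k
    induction k with
    | zero =>
      intro h
      have h2 := hP 2 le_rfl (by omega)
      simp only [Nat.reduceSub, Nat.reduceAdd, Nat.add_sub_cancel] at h2
      simp only [zero_add, h2, hPD0, hPD1, hP0, hP1, Finset.prod_range_one, Nat.sub_zero]
      ring
    | succ k ih =>
      intro h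
      have e := ih (by omega)
      have h1 := hP (k+3) (by omega) (by omega)
      have h2 := hPD (k+2) (by omega) (by omega)
      rw [show k + 3 - 1 = k + 2 by omega, show k + 3 - 2 = k + 1 by omega,
        show n0 + 2 - (k + 3) = n0 - (k + 1) by omega] at h1
      rw [show k + 2 - 1 = k + 1 by omega, show k + 2 - 2 = k by omega,
        show n0 + 1 - (k + 2) = n0 - (k + 1) by omega] at h2
      rw [Finset.prod_range_succ, C_mul, ← e]
      show PD (k+2) * P (k+2) - PD (k+1) * P (k+3) = _
      rw [h1, h2]
      ring
  obtain ⟨m, rfl⟩ : ∃ m, n0 = m + 2 := ⟨n0 - 2, by omega⟩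
  have e := key m le_rfl
  rw [show m + 2 - 1 = m + 1 by omega, show m + 2 - 2 = m by omega, e]
  congr 1
  have hI : ∏ i ∈ Finset.Icc 2 (m+1), a i = ∏ j ∈ Finset.range m, a (j+2) := by
    rw [Finset.range_eq_Ico, Finset.prod_Ico_add' (fun i => a i) 0 m 2]
    rfl
  have hR : ∏ j ∈ Finset.range (m+1), a (m + 2 - j) = ∏ j ∈ Finset.range (m+1), a (j+2) := by
    rw [← Finset.prod_range_reflect]
    apply Finset.prod_congr rfl
    intro j hj
    rw [Finset.mem_range] at hj
    congr 1
    omega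
  rw [Finset.prod_mul_distrib, hR, hI, Finset.prod_range_succ', Finset.prod_range_succ]
  ring
end

section
/- The polynomial identity (z − b(0))·P^D_{n0−1}(z) = P_{n0}(z) + a(1)·a(n0)·P^D_{n0−2}(z) holds. -/
open Polynomial

noncomputable def contK (b c : ℕ → ℝ) (s : ℕ) : ℕ → Polynomial ℝ
  | 0 => 1
  | 1 => X - C (b s)
  | (k+2) => (X - C (b (s+k+1))) * contK b c s (k+1) - C (c (s+k+1)) * contK b c s k

theorem contK_left (b c : ℕ → ℝ) (s k : ℕ) :
    contK b c s (k+2) = (X - C (b s)) * contK b c (s+1) (k+1)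
      - C (c (s+1)) * contK b c (s+2) k := by
  induction k using Nat.strong_induction_on with
  | _ k ih =>
    match k with
    | 0 => simp [contK]; ring
    | 1 => simp [contK]; ring
    | (k+2) =>
      have h1 := ih (k+1) (by omega)
      have h0 := ih k (by omega)
      rw [contK, h1, h0, contK.eq_3 b c (s+1) (k+1), contK.eq_3 b c (s+2) k]
      have e1 : s + 1 + (k+1) + 1 = s + (k+2) + 1 := by omega
      have e2 : s + 2 + k + 1 = s + (k+2) + 1 := by omega
      rw [e1, e2]
      ring

theorem statement_4 (n0 : ℕ) (hn0 : 2 ≤ n0) (a b : ℕ → ℝ)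
    (ha : ∀ i, 1 ≤ i → i ≤ n0 → a i ≠ 0)
    (hb : ∀ j, j ≤ n0 → b j = b (n0 - j))
    (P : ℕ → Polynomial ℝ)
    (hP0 : P 0 = 1) (hP1 : P 1 = X - C (b 0))
    (hP : ∀ k, 2 ≤ k → k ≤ n0 + 1 →
      P k = (X - C (b (k - 1))) * P (k - 1) - C (a (k - 1) * a (n0 + 2 - k)) * P (k - 2))
    (PD : ℕ → Polynomial ℝ)
    (hPD0 : PD 0 = 1) (hPD1 : PD 1 = X - C (b 1))
    (hPD : ∀ k, 2 ≤ k → k ≤ n0 - 1 →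
      PD k = (X - C (b k)) * PD (k - 1) - C (a k * a (n0 + 1 - k)) * PD (k - 2)) :
    (X - C (b 0)) * PD (n0 - 1) = P n0 + C (a 1 * a n0) * PD (n0 - 2) := by
  set c : ℕ → ℝ := fun j => a j * a (n0 + 1 - j) with hc
  have hPK : ∀ k, k ≤ n0 + 1 → P k = contK b c 0 k := by
    intro k
    induction k using Nat.strong_induction_on with
    | _ k ih =>
      intro hk
      match k with
      | 0 => simp [contK, hP0]
      | 1 => simp [contK, hP1]
      | (k+2) =>
        rw [hP (k+2) (by omega) hk, contK, ← ih (k+1) (by omega) (by omega),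
          ← ih k (by omega) (by omega)]
        have e : n0 + 2 - (k+2) = n0 + 1 - (k+1) := by omega
        simp [hc, e]
  have hDK : ∀ k, k ≤ n0 - 1 → PD k = contK b c 1 k := by
    intro k
    induction k using Nat.strong_induction_on with
    | _ k ih =>
      intro hk
      match k with
      | 0 => simp [contK, hPD0]
      | 1 => simp [contK, hPD1]
      | (k+2) =>
        rw [hPD (k+2) (by omega) hk, contK, ← ih (k+1) (by omega) (by omega),
          ← ih k (by omega) (by omega)]
        have e : 1 + k + 1 = k + 2 := by omega
        simp [hc, e]
  have hR : ∀ k, k ≤ n0 - 1 → PD k = contK b c (n0 - k) k := by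
    intro k
    induction k using Nat.strong_induction_on with
    | _ k ih =>
      intro hk
      match k with
      | 0 => simp [contK, hPD0]
      | 1 => simp [contK, hPD1, hb 1 (by omega)]
      | (k+2) =>
        have e1 : n0 - (k+2) + 1 = n0 - (k+1) := by omega
        have e2 : n0 - (k+2) + 2 = n0 - k := by omega
        rw [hPD (k+2) (by omega) hk, contK_left, e1, e2, ← ih (k+1) (by omega) (by omega),
          ← ih k (by omega) (by omega), ← hb (k+2) (by omega)]
        have e3 : n0 + 1 - (k+2) = n0 - (k+1) := by omega
        have e4 : n0 + 1 - (n0 - (k+1)) = k + 2 := by omega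
        simp only [hc, e3, e4, mul_comm (a (k+2))]
        rfl
  obtain ⟨m, rfl⟩ : ∃ m, n0 = m + 2 := ⟨n0 - 2, by omega⟩
  have h3 := hR m (by omega)
  have e5 : m + 2 - m = 2 := by omega
  rw [e5] at h3
  have e6 : m + 2 - 1 = m + 1 := by omega
  have e7 : m + 2 - 2 = m := by omega
  rw [e6, e7, hPK (m+2) (by omega), contK_left, h3, hDK (m+1) (by omega)]
  simp [hc]
end

section
/- For every z ∈ ℝ, (P_{n0}(z))² − ( ∏_{i=1}^{n0} a(i) )² = det(z·I − J_cs) · det(z·I − J^D_cs). -/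
open Polynomial

/-- The `(n0+1) × (n0+1)` centrosymmetric tridiagonal Jacobi matrix. -/
noncomputable def Jcs (n0 : ℕ) (a b : ℕ → ℝ) :
    Matrix (Fin (n0 + 1)) (Fin (n0 + 1)) ℝ :=
  Matrix.of fun i j =>
    if (j : ℕ) = (i : ℕ) then b (i : ℕ)
    else if (j : ℕ) = (i : ℕ) + 1 then a ((i : ℕ) + 1)
    else if (i : ℕ) = (j : ℕ) + 1 then a (n0 - (j : ℕ))
    else 0

/-- The `(n0−1) × (n0−1)` Dirichlet restriction of `Jcs`, obtained by deleting the
first and last rows and columns. -/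
noncomputable def JDcs (n0 : ℕ) (a b : ℕ → ℝ) :
    Matrix (Fin (n0 - 1)) (Fin (n0 - 1)) ℝ :=
  Matrix.of fun i j =>
    Jcs n0 a b ⟨(i : ℕ) + 1, by have := i.isLt; omega⟩ ⟨(j : ℕ) + 1, by have := j.isLt; omega⟩

def KK (d c : ℕ → ℝ) (s : ℕ) : ℕ → ℝ
  | 0 => 1
  | 1 => d s
  | (m+2) => d (s+m+1) * KK d c s (m+1) - c (s+m) * KK d c s m

theorem KK_first (d c : ℕ → ℝ) (s m : ℕ) :
    KK d c s (m+2) = d s * KK d c (s+1) (m+1) - c s * KK d c (s+2) m ∧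
    KK d c s (m+3) = d s * KK d c (s+1) (m+2) - c s * KK d c (s+2) (m+1) := by
  induction m with
  | zero => constructor <;> simp [KK] <;> ring
  | succ m ih =>
    refine ⟨ih.2, ?_⟩
    have e1 : s + 1 + (m + 1) + 1 = s + (m+2) + 1 := by omega
    have e2 : s + 1 + (m + 1) = s + (m+2) := by omega
    have e3 : s + 2 + m + 1 = s + (m+2) + 1 := by omega
    have e4 : s + 2 + m = s + (m+2) := by omega
    have h1 : KK d c s (m+1+3) = d (s+(m+2)+1) * KK d c s (m+3) - c (s+(m+2)) * KK d c s (m+2) := rfl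
    have h2 : KK d c (s+1) (m+1+2) = d (s+(m+2)+1) * KK d c (s+1) (m+2) - c (s+(m+2)) * KK d c (s+1) (m+1) := by
      rw [← e1, ← e2]; rfl
    have h3 : KK d c (s+2) (m+1+1) = d (s+(m+2)+1) * KK d c (s+2) (m+1) - c (s+(m+2)) * KK d c (s+2) m := by
      rw [← e3, ← e4]; rfl
    rw [h1, h2, h3, ih.1, ih.2]; ring

theorem KK_rev (n : ℕ) (d c : ℕ → ℝ) (hd : ∀ j, j ≤ n → d j = d (n - j))
    (hc : ∀ j, j < n → c j = c (n - 1 - j)) (m : ℕ) :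
    (∀ s t, s + t + m = n + 1 → KK d c s m = KK d c t m) ∧
    (∀ s t, s + t + (m+1) = n + 1 → KK d c s (m+1) = KK d c t (m+1)) := by
  induction m with
  | zero =>
    refine ⟨fun s t _ => rfl, fun s t h => ?_⟩
    simp only [KK]
    rw [hd s (by omega)]; congr 1; omega
  | succ m ih =>
    refine ⟨ih.2, fun s t h => ?_⟩
    rw [(KK_first d c t m).1]
    simp only [KK]
    rw [ih.2 s (t+1) (by omega), ih.1 s (t+2) (by omega), hd (s+m+1) (by omega),
      hc (s+m) (by omega)]
    have e1 : n - (s+m+1) = t := by omega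
    have e2 : n - 1 - (s+m) = t := by omega
    rw [e1, e2]

theorem KK_euler (d c : ℕ → ℝ) (m : ℕ) :
    KK d c 0 (m+1) * KK d c 1 (m+1) - KK d c 0 (m+2) * KK d c 1 m
      = ∏ j ∈ Finset.range (m+1), c j := by
  induction m with
  | zero => simp [KK]; ring
  | succ m ih =>
    rw [Finset.prod_range_succ, ← ih]
    have h1 : KK d c 0 (m+1+2) = d (m+2) * KK d c 0 (m+2) - c (m+1) * KK d c 0 (m+1) := by
      have e1 : 0 + (m+1) + 1 = m + 2 := by omega
      have e2 : 0 + (m+1) = m + 1 := by omega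
      rw [← e1, ← e2, Nat.zero_add]; simp [KK]
    have h2 : KK d c 1 (m+1+1) = d (m+2) * KK d c 1 (m+1) - c (m+1) * KK d c 1 m := by
      have e1 : 1 + m + 1 = m + 2 := by omega
      have e2 : 1 + m = m + 1 := by omega
      have h : KK d c 1 (m+1+1) = d (1+m+1) * KK d c 1 (m+1) - c (1+m) * KK d c 1 m := rfl
      rw [h, e1, e2]
    rw [h1, h2]; ring

def TT (d u l : ℕ → ℝ) (s m : ℕ) : Matrix (Fin m) (Fin m) ℝ :=
  Matrix.of fun i j =>
    if (j : ℕ) = (i : ℕ) then d (s + i)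
    else if (j : ℕ) = (i : ℕ) + 1 then u (s + i)
    else if (i : ℕ) = (j : ℕ) + 1 then l (s + j)
    else 0

theorem TT_rec (d u l : ℕ → ℝ) (s m : ℕ) :
    (TT d u l s (m+2)).det = d s * (TT d u l (s+1) (m+1)).det
      - u s * l s * (TT d u l (s+2) m).det := by
  rw [Matrix.det_succ_row_zero, Fin.sum_univ_succ, Fin.sum_univ_succ]
  have hz : ∀ i : Fin m, TT d u l s (m+2) 0 i.succ.succ = 0 := by
    intro i; simp [TT]
  have h1 : (TT d u l s (m+2)).submatrix Fin.succ (Fin.succAbove 0) = TT d u l (s+1) (m+1) := by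
    ext i j
    simp [TT, Nat.add_assoc, Nat.add_comm 1]
  have h2 : ((TT d u l s (m+2)).submatrix Fin.succ (Fin.succAbove (Fin.succ 0))).det
      = l s * (TT d u l (s+2) m).det := by
    rw [Matrix.det_succ_column_zero, Fin.sum_univ_succ]
    have hz' : ∀ i : Fin m, ((TT d u l s (m+2)).submatrix Fin.succ (Fin.succAbove (Fin.succ 0))) i.succ 0 = 0 := by
      intro i; simp [TT]
    have h3 : ((TT d u l s (m+2)).submatrix Fin.succ (Fin.succAbove (Fin.succ 0))).submatrix (Fin.succAbove 0) Fin.succ = TT d u l (s+2) m := by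
      ext i j
      have : (Fin.succAbove (Fin.succ 0) j.succ : Fin (m+2)) = j.succ.succ := by
        rw [Fin.succ_succAbove_succ]; simp
      simp only [Matrix.submatrix_apply, this]
      simp [TT, Nat.add_assoc, Nat.add_comm 2]
    rw [h3]
    simp only [hz']
    simp [TT]
  rw [h1, h2]
  simp only [hz]
  simp [TT]
  ring

theorem TT_det (d u l : ℕ → ℝ) (m : ℕ) :
    (∀ s, (TT d u l s m).det = KK d (fun j => u j * l j) s m) ∧
    (∀ s, (TT d u l s (m+1)).det = KK d (fun j => u j * l j) s (m+1)) := by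
  induction m with
  | zero => exact ⟨fun s => by simp [KK], fun s => by simp [KK, TT]⟩
  | succ m ih =>
    refine ⟨ih.2, fun s => ?_⟩
    rw [TT_rec, (KK_first _ _ s m).1, ih.1, ih.2]

/-- `P_{n0}(z)² − (∏ a(i))² = det(z·I − J_cs) · det(z·I − J^D_cs)`. -/
theorem statement_5 (n0 : ℕ) (hn0 : 2 ≤ n0) (a b : ℕ → ℝ)
    (ha : ∀ i, 1 ≤ i → i ≤ n0 → a i ≠ 0)
    (hb : ∀ j, j ≤ n0 → b j = b (n0 - j))
    (P : ℕ → Polynomial ℝ)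
    (hP0 : P 0 = 1) (hP1 : P 1 = X - C (b 0))
    (hP : ∀ k, 2 ≤ k → k ≤ n0 + 1 →
      P k = (X - C (b (k - 1))) * P (k - 1) - C (a (k - 1) * a (n0 + 2 - k)) * P (k - 2))
    (PD : ℕ → Polynomial ℝ)
    (hPD0 : PD 0 = 1) (hPD1 : PD 1 = X - C (b 1))
    (hPD : ∀ k, 2 ≤ k → k ≤ n0 - 1 →
      PD k = (X - C (b k)) * PD (k - 1) - C (a k * a (n0 + 1 - k)) * PD (k - 2)) :
    ∀ z : ℝ,
      (P n0).eval z ^ 2 - (∏ i ∈ Finset.Icc 1 n0, a i) ^ 2 =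
        (z • (1 : Matrix (Fin (n0 + 1)) (Fin (n0 + 1)) ℝ) - Jcs n0 a b).det *
        (z • (1 : Matrix (Fin (n0 - 1)) (Fin (n0 - 1)) ℝ) - JDcs n0 a b).det := by
  intro z
  set d : ℕ → ℝ := fun j => z - b j with hd
  set u : ℕ → ℝ := fun j => - a (j+1) with hu
  set l : ℕ → ℝ := fun j => - a (n0 - j) with hl
  have hJ : z • (1 : Matrix (Fin (n0 + 1)) (Fin (n0 + 1)) ℝ) - Jcs n0 a b
      = TT d u l 0 (n0+1) := by
    ext i j
    simp only [Matrix.sub_apply, Matrix.smul_apply, Matrix.one_apply, Jcs, TT, Matrix.of_apply,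
      Fin.ext_iff, hd, hu, hl, Nat.zero_add, smul_eq_mul]
    split_ifs <;> first | omega | simp
  have hJD : z • (1 : Matrix (Fin (n0 - 1)) (Fin (n0 - 1)) ℝ) - JDcs n0 a b
      = TT d u l 1 (n0-1) := by
    ext i j
    simp only [Matrix.sub_apply, Matrix.smul_apply, Matrix.one_apply, JDcs, Jcs, TT, Matrix.of_apply,
      Fin.ext_iff, hd, hu, hl, Nat.add_comm 1, smul_eq_mul]
    split_ifs <;> first | omega | simp
  rw [hJ, hJD, (TT_det d u l (n0+1)).1, (TT_det d u l (n0-1)).1]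
  set c : ℕ → ℝ := fun j => u j * l j with hc
  have hPK : ∀ k, (k ≤ n0 + 1 → (P k).eval z = KK d c 0 k) ∧
      (k + 1 ≤ n0 + 1 → (P (k+1)).eval z = KK d c 0 (k+1)) := by
    intro k
    induction k with
    | zero => exact ⟨fun _ => by simp [hP0, KK], fun _ => by simp [hP1, KK, hd]⟩
    | succ k ih =>
      refine ⟨ih.2, fun h => ?_⟩
      rw [hP (k+1+1) (by omega) h]
      have e1 : k + 1 + 1 - 1 = k + 1 := by omega
      have e2 : k + 1 + 1 - 2 = k := by omega
      have e3 : n0 + 2 - (k+1+1) = n0 - k := by omega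
      rw [e1, e2, e3]
      simp only [KK, eval_sub, eval_mul, eval_X, eval_C, ih.1 (by omega), ih.2 (by omega)]
      simp [hc, hd, hu, hl]
  have hprod : ∏ j ∈ Finset.range n0, c j = (∏ i ∈ Finset.Icc 1 n0, a i) ^ 2 := by
    have h1 : ∏ i ∈ Finset.Icc 1 n0, a i = ∏ j ∈ Finset.range n0, a (j+1) := by
      rw [Finset.range_eq_Ico, Finset.prod_Ico_add' a 0 n0 1]
      rfl
    have h2 : ∏ j ∈ Finset.range n0, a (n0 - j) = ∏ j ∈ Finset.range n0, a (j+1) := by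
      rw [← Finset.prod_range_reflect (fun j => a (j+1)) n0]
      refine Finset.prod_congr rfl fun j hj => ?_
      have := Finset.mem_range.1 hj
      congr 1; omega
    rw [h1, sq]
    nth_rewrite 2 [← h2]
    rw [← Finset.prod_mul_distrib]
    simp [hc, hu, hl]
  have hrev : KK d c 0 n0 = KK d c 1 n0 := by
    refine (KK_rev n0 d c (fun j hj => ?_) (fun j hj => ?_) n0).1 0 1 (by omega)
    · simp only [hd]; rw [hb j hj]
    · simp only [hc, hu, hl]
      have e1 : n0 - 1 - j + 1 = n0 - j := by omega
      have e2 : n0 - (n0 - 1 - j) = j + 1 := by omega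
      rw [e1, e2]; ring
  obtain ⟨m, rfl⟩ : ∃ m, n0 = m + 1 := ⟨n0 - 1, by omega⟩
  have hE := KK_euler d c m
  rw [← hrev, hprod] at hE
  rw [(hPK (m+1)).1 (by omega)]
  have e : m + 1 - 1 = m := by omega
  rw [e]
  linarith [hE]
end

section
/- For every z ∈ ℝ with det(z·I − J^D_cs) ≠ 0, the 2×2 matrix X̄0 · (z·I − J^D_cs)^{−1} · X0 equals (a(1)·a(n0)/P^D_{n0−1}(z)) times the 2×2 matrix whose diagonal entries are P^D_{n0−2}(z) and whose off-diagonal entries are ∏_{i=2}^{n0−1} a(i) (the empty product being 1 when n0 = 2). -/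
open Polynomial

/-- The `(n0−1) × 2` interior-to-boundary block `X₀` of `J_cs`: its only nonzero
entries are `X₀(1, 0) = a n0` (first interior row, boundary vertex `0`) and
`X₀(n0−1, n0) = a n0` (last interior row, boundary vertex `n0`). -/
noncomputable def X0mat (n0 : ℕ) (a : ℕ → ℝ) : Matrix (Fin (n0 - 1)) (Fin 2) ℝ :=
  Matrix.of fun i j =>
    if (i : ℕ) = 0 ∧ (j : ℕ) = 0 then a n0
    else if (i : ℕ) = n0 - 2 ∧ (j : ℕ) = 1 then a n0
    else 0

/-- The `2 × (n0−1)` boundary-to-interior block `X̄₀` of `J_cs`: its only nonzero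
entries are `X̄₀(0, 1) = a 1` and `X̄₀(n0, n0−1) = a 1`. -/
noncomputable def Xbar0mat (n0 : ℕ) (a : ℕ → ℝ) : Matrix (Fin 2) (Fin (n0 - 1)) ℝ :=
  Matrix.of fun i j =>
    if (i : ℕ) = 0 ∧ (j : ℕ) = 0 then a 1
    else if (i : ℕ) = 1 ∧ (j : ℕ) = n0 - 2 then a 1
    else 0


noncomputable def JDm (m : ℕ) (a b : ℕ → ℝ) : Matrix (Fin (m+1)) (Fin (m+1)) ℝ := JDcs (m+2) a b
noncomputable def XBm (m : ℕ) (a : ℕ → ℝ) : Matrix (Fin 2) (Fin (m+1)) ℝ := Xbar0mat (m+2) a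
noncomputable def X0m (m : ℕ) (a : ℕ → ℝ) : Matrix (Fin (m+1)) (Fin 2) ℝ := X0mat (m+2) a

noncomputable def Tn (m : ℕ) (a b : ℕ → ℝ) (z : ℝ) (j k : ℕ) : ℝ :=
  (if k = j then z - b (j+1) else 0) - (if k = j + 1 then a (j+2) else 0)
    - (if j = k + 1 then a (m + 2 - j) else 0)

lemma Tn_eq (m : ℕ) (a b : ℕ → ℝ) (z : ℝ) (i j : Fin (m+1)) :
    (z • (1 : Matrix (Fin (m+1)) (Fin (m+1)) ℝ) - JDm m a b) i j = Tn m a b z i j := by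
  have h : (1 : Matrix (Fin (m+1)) (Fin (m+1)) ℝ) i j = if (j:ℕ) = i then 1 else 0 := by
    rw [Matrix.one_apply]
    congr 1
    simp [Fin.ext_iff, eq_comm]
  have e : (z • (1 : Matrix (Fin (m+1)) (Fin (m+1)) ℝ) - JDm m a b) i j
    = z * (1 : Matrix (Fin (m+1)) (Fin (m+1)) ℝ) i j - JDm m a b i j := rfl
  rw [e, h]
  simp only [JDm, JDcs, Jcs, Matrix.of_apply, Tn]
  by_cases h1 : (j:ℕ) = i
  · simp [h1]
  · by_cases h2 : (j:ℕ) = i + 1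
    · have h4 : ¬ (i:ℕ) = i + 1 + 1 := by omega
      simp [h2, h4]
    · by_cases h3 : (i:ℕ) = j + 1
      · have h4 : ¬ (j:ℕ) = j + 1 + 1 := by omega
        simp [h3, h4]
      · simp [h1, h2, h3]

lemma Tn_rev (m : ℕ) (a b : ℕ → ℝ) (hb : ∀ j, j ≤ m+2 → b j = b (m+2 - j)) (z : ℝ)
    (i j : ℕ) (hi : i ≤ m) (hj : j ≤ m) :
    Tn m a b z (m - i) (m - j) = Tn m a b z i j := by
  unfold Tn
  by_cases h1 : j = i
  · subst h1
    have := hb (j+1) (by omega)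
    rw [this, show m + 2 - (j+1) = m - j + 1 by omega]
    simp
  · by_cases h2 : j = i + 1
    · subst h2
      rw [if_neg (by omega), if_neg (by omega), if_pos (by omega), if_neg (by omega),
        if_pos (by omega), if_neg (by omega), show m + 2 - (m - i) = i + 2 by omega]
      ring
    · by_cases h3 : i = j + 1
      · subst h3
        rw [if_neg (by omega), if_pos (by omega), if_neg (by omega), if_neg (by omega),
          if_neg (by omega), if_pos (by omega), show m - (j+1) + 2 = m + 2 - (j + 1) by omega]
        ring
      · rw [if_neg (by omega), if_neg (by omega), if_neg (by omega), if_neg (by omega),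
          if_neg (by omega), if_neg (by omega)]

noncomputable def vn (m : ℕ) (a : ℕ → ℝ) (p : ℕ → ℝ) (j : ℕ) : ℝ :=
  (∏ i ∈ Finset.Icc (j+2) (m+1), a i) * p j

lemma Tn_sum (m : ℕ) (a b : ℕ → ℝ) (z : ℝ) (p : ℕ → ℝ) (h0 : p 0 = 1) (h1 : p 1 = z - b 1)
    (hp : ∀ k, 2 ≤ k → k ≤ m + 1 →
      p k = (z - b k) * p (k-1) - a k * a (m + 3 - k) * p (k-2)) (j : ℕ) (hj : j ≤ m) :
    ∑ k ∈ Finset.range (m+1), Tn m a b z j k * vn m a p k = if j = m then p (m+1) else 0 := by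
  have hw : ∀ j, j < m → ∏ i ∈ Finset.Icc (j+2) (m+1), a i
      = a (j+2) * ∏ i ∈ Finset.Icc (j+1+2) (m+1), a i := by
    intro j hj
    rw [← Finset.mul_prod_Ioc_eq_prod_Icc (by omega : j + 2 ≤ m + 1)]
    congr 1
    apply Finset.prod_congr _ (fun _ _ => rfl)
    ext x
    simp only [Finset.mem_Ioc, Finset.mem_Icc]
    omega
  have hwm : ∏ i ∈ Finset.Icc (m+2) (m+1), a i = 1 := by
    rw [Finset.Icc_eq_empty (by omega)]; rfl
  have key : ∑ k ∈ Finset.range (m+1), Tn m a b z j k * vn m a p k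
     = (z - b (j+1)) * vn m a p j - (if j < m then a (j+2) * vn m a p (j+1) else 0)
       - (if 1 ≤ j then a (m+2-j) * vn m a p (j-1) else 0) := by
    simp only [Tn, sub_mul, ite_mul, zero_mul, Finset.sum_sub_distrib]
    have e3 : ∀ k, (if j = k + 1 then a (m+2-j) * vn m a p k else 0)
      = if k = j - 1 then (if 1 ≤ j then a (m+2-j) * vn m a p k else 0) else 0 := by
      intro k
      split_ifs <;> first | rfl | omega
    simp only [e3, Finset.sum_ite_eq', Finset.mem_range]
    rw [if_pos (by omega), if_pos (by omega : j - 1 < m + 1)]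
    simp
  have hrec : p (j+1) = (z - b (j+1)) * p j
      - (if 1 ≤ j then a (j+1) * a (m+2-j) * p (j-1) else 0) := by
    by_cases hj1 : 1 ≤ j
    · rw [if_pos hj1, hp (j+1) (by omega) (by omega), show m + 3 - (j+1) = m + 2 - j by omega,
        show j + 1 - 2 = j - 1 by omega]
      rfl
    · obtain rfl : j = 0 := by omega
      simp [h0, h1]
  have h3 : (if 1 ≤ j then a (m+2-j) * vn m a p (j-1) else 0)
     = (∏ i ∈ Finset.Icc (j+2) (m+1), a i) *
       (if 1 ≤ j then a (j+1) * a (m+2-j) * p (j-1) else 0) := by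
    by_cases hj1 : 1 ≤ j
    · obtain ⟨l, rfl⟩ : ∃ l, j = l + 1 := ⟨j - 1, by omega⟩
      rw [if_pos hj1, if_pos hj1, vn, show l + 1 - 1 = l by omega, hw l (by omega)]
      ring
    · simp [hj1]
  rw [key, h3]
  by_cases hjm : j = m
  · subst hjm
    rw [if_neg (lt_irrefl _), if_pos rfl, hrec, vn, hwm]
    ring
  · rw [if_pos (by omega), if_neg hjm, vn, vn, hrec, hw j (by omega)]
    ring

/-- For `z` with `det(z·I − J^D_cs) ≠ 0`,
`X̄₀ · (z·I − J^D_cs)⁻¹ · X₀` equals `(a 1 · a n0 / P^D_{n0−1}(z))` times the `2 × 2`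
matrix with diagonal entries `P^D_{n0−2}(z)` and off-diagonal entries `∏_{i=2}^{n0−1} a i`. -/
theorem statement_6 (n0 : ℕ) (hn0 : 2 ≤ n0) (a b : ℕ → ℝ)
    (ha : ∀ i, 1 ≤ i → i ≤ n0 → a i ≠ 0)
    (hb : ∀ j, j ≤ n0 → b j = b (n0 - j))
    (P : ℕ → Polynomial ℝ)
    (hP0 : P 0 = 1) (hP1 : P 1 = X - C (b 0))
    (hP : ∀ k, 2 ≤ k → k ≤ n0 + 1 →
      P k = (X - C (b (k - 1))) * P (k - 1) - C (a (k - 1) * a (n0 + 2 - k)) * P (k - 2))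
    (PD : ℕ → Polynomial ℝ)
    (hPD0 : PD 0 = 1) (hPD1 : PD 1 = X - C (b 1))
    (hPD : ∀ k, 2 ≤ k → k ≤ n0 - 1 →
      PD k = (X - C (b k)) * PD (k - 1) - C (a k * a (n0 + 1 - k)) * PD (k - 2)) :
    ∀ z : ℝ,
      (z • (1 : Matrix (Fin (n0 - 1)) (Fin (n0 - 1)) ℝ) - JDcs n0 a b).det ≠ 0 →
      Xbar0mat n0 a * (z • (1 : Matrix (Fin (n0 - 1)) (Fin (n0 - 1)) ℝ) - JDcs n0 a b)⁻¹ *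
          X0mat n0 a =
        (a 1 * a n0 / (PD (n0 - 1)).eval z) •
          !![(PD (n0 - 2)).eval z, ∏ i ∈ Finset.Icc 2 (n0 - 1), a i;
             ∏ i ∈ Finset.Icc 2 (n0 - 1), a i, (PD (n0 - 2)).eval z] := by
  intro z hdet
  obtain ⟨m, rfl⟩ : ∃ m, n0 = m + 2 := ⟨n0 - 2, by omega⟩
  clear hP hP0 hP1 P
  set p : ℕ → ℝ := fun k => (PD k).eval z with hpdef
  have h0 : p 0 = 1 := by simp [hpdef, hPD0]
  have h1 : p 1 = z - b 1 := by simp [hpdef, hPD1]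
  have hp : ∀ k, 2 ≤ k → k ≤ m + 1 →
      p k = (z - b k) * p (k-1) - a k * a (m + 3 - k) * p (k-2) := by
    intro k hk hk'
    simp only [hpdef]
    rw [hPD k hk (by omega)]
    simp
  have hsum := Tn_sum m a b z p h0 h1 hp
  change XBm m a * (z • (1 : Matrix (Fin (m+1)) (Fin (m+1)) ℝ) - JDm m a b)⁻¹ *
    X0m m a = (a 1 * a (m+2) / p (m+1)) • !![p m, ∏ i ∈ Finset.Icc 2 (m+1), a i;
             ∏ i ∈ Finset.Icc 2 (m+1), a i, p m]
  change (z • (1 : Matrix (Fin (m+1)) (Fin (m+1)) ℝ) - JDm m a b).det ≠ 0 at hdet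
  have hT := Tn_eq m a b z
  set M : Matrix (Fin (m+1)) (Fin (m+1)) ℝ :=
    z • (1 : Matrix (Fin (m+1)) (Fin (m+1)) ℝ) - JDm m a b with hM
  clear_value M
  have hu : IsUnit M.det := isUnit_iff_ne_zero.mpr hdet
  have hv0 : vn m a p 0 = ∏ i ∈ Finset.Icc 2 (m+1), a i := by simp [vn, h0]
  have hvm : vn m a p m = p m := by
    rw [vn, Finset.Icc_eq_empty (by omega)]; simp
  have hne : (∏ i ∈ Finset.Icc 2 (m+1), a i) ≠ 0 := by
    rw [Finset.prod_ne_zero_iff]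
    intro i hi
    rw [Finset.mem_Icc] at hi
    exact ha i (by omega) (by omega)
  have hA : M.mulVec (fun k : Fin (m+1) => vn m a p k) = Pi.single (Fin.last m) (p (m+1)) := by
    ext j
    have := hsum j (by omega)
    rw [← Fin.sum_univ_eq_sum_range (fun k => Tn m a b z j k * vn m a p k)] at this
    simp only [Matrix.mulVec, dotProduct, hT]
    rw [this, Pi.single_apply]
    simp [Fin.ext_iff]
  have hB : M.mulVec (fun k : Fin (m+1) => vn m a p (m - k)) = Pi.single 0 (p (m+1)) := by
    ext j
    have := hsum (m - j) (by omega)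
    rw [← Fin.sum_univ_eq_sum_range (fun k => Tn m a b z (m - j) k * vn m a p k)] at this
    simp only [Matrix.mulVec, dotProduct, hT]
    rw [← Equiv.sum_comp Fin.revPerm] at this
    have e : ∀ k : Fin (m+1), Tn m a b z j k * vn m a p (m - k)
        = Tn m a b z (m - j) (Fin.revPerm k : Fin (m+1)) * vn m a p (Fin.revPerm k : Fin (m+1)) := by
      intro k
      have hk : ((Fin.revPerm k : Fin (m+1)) : ℕ) = m - k := by
        simp [Fin.val_rev]
      rw [hk, Tn_rev m a b hb z j k (by omega) (by omega)]
    rw [Finset.sum_congr rfl (fun k _ => e k), this, Pi.single_apply]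
    congr 1
    simp only [Fin.ext_iff, eq_iff_iff, Fin.val_zero]
    omega
  have hA' : ∀ i : Fin (m+1), vn m a p i = M⁻¹ i (Fin.last m) * p (m+1) := by
    intro i
    have := congrFun (congrArg (M⁻¹).mulVec hA) i
    rw [Matrix.mulVec_mulVec, Matrix.nonsing_inv_mul _ hu, Matrix.one_mulVec] at this
    simpa using this
  have hB' : ∀ i : Fin (m+1), vn m a p (m - i) = M⁻¹ i 0 * p (m+1) := by
    intro i
    have := congrFun (congrArg (M⁻¹).mulVec hB) i
    rw [Matrix.mulVec_mulVec, Matrix.nonsing_inv_mul _ hu, Matrix.one_mulVec] at this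
    simpa using this
  have hpm : p (m+1) ≠ 0 := by
    intro h
    have := hA' 0
    rw [h, mul_zero] at this
    exact hne (hv0 ▸ this)
  have c1 : M⁻¹ 0 (Fin.last m) = (∏ i ∈ Finset.Icc 2 (m+1), a i) / p (m+1) := by
    rw [eq_div_iff hpm, ← hA', ← hv0]; rfl
  have c2 : M⁻¹ (Fin.last m) (Fin.last m) = p m / p (m+1) := by
    rw [eq_div_iff hpm, ← hA', ← hvm]; rfl
  have c3 : M⁻¹ 0 0 = p m / p (m+1) := by
    rw [eq_div_iff hpm, ← hB', ← hvm]; rfl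
  have c4 : M⁻¹ (Fin.last m) 0 = (∏ i ∈ Finset.Icc 2 (m+1), a i) / p (m+1) := by
    rw [eq_div_iff hpm, ← hB', ← hv0]; simp
  have hXb : ∀ (r : Fin 2) (k : Fin (m+1)), XBm m a r k =
      if k = (if r = 0 then 0 else Fin.last m) then a 1 else 0 := by
    intro r k
    have hl : k = Fin.last m ↔ (k:ℕ) = m := Fin.ext_iff
    fin_cases r <;> simp [XBm, Xbar0mat, hl]
  have hX : ∀ (k : Fin (m+1)) (r : Fin 2), X0m m a k r =
      if k = (if r = 0 then 0 else Fin.last m) then a (m+2) else 0 := by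
    intro k r
    have hl : k = Fin.last m ↔ (k:ℕ) = m := Fin.ext_iff
    fin_cases r <;> simp [X0m, X0mat, hl]
  have hent : ∀ r s : Fin 2, (XBm m a * M⁻¹ * X0m m a : Matrix (Fin 2) (Fin 2) ℝ) r s
      = a 1 * M⁻¹ (if r = 0 then 0 else Fin.last m) (if s = 0 then 0 else Fin.last m) * a (m+2) := by
    intro r s
    change ∑ l : Fin (m+1), (∑ k : Fin (m+1), XBm m a r k * M⁻¹ k l) * X0m m a l s = _
    simp only [hXb, hX, ite_mul, zero_mul, mul_ite, mul_zero, Finset.sum_ite_eq', Finset.mem_univ,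
      if_true]
  ext r s
  refine (hent r s).trans ?_
  fin_cases r <;> fin_cases s <;> simp [c1, c2, c3, c4] <;> ring
end

section
/- For every z ∈ ℝ with det(z·I − J^D_cs) ≠ 0, the Schur complement of J_cs with respect to the boundary/interior decomposition satisfies z·I₂ − b(0)·I₂ − X̄0·(z·I − J^D_cs)^{−1}·X0 = φ(z)·( R(z)·I₂ − Δ₀ ), where Δ₀ is the 2×2 matrix with rows (1,−1) and (−1,1). -/
open Polynomial

noncomputable def JDx (m : ℕ) (a b : ℕ → ℝ) : Matrix (Fin (m + 1)) (Fin (m + 1)) ℝ :=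
  JDcs (m + 2) a b

noncomputable def X0x (m : ℕ) (a : ℕ → ℝ) : Matrix (Fin (m + 1)) (Fin 2) ℝ :=
  X0mat (m + 2) a

noncomputable def Xbx (m : ℕ) (a : ℕ → ℝ) : Matrix (Fin 2) (Fin (m + 1)) ℝ :=
  Xbar0mat (m + 2) a

theorem tri_sum_aux (N i : ℕ) (hi : i < N) (A B : ℝ) (D v : ℕ → ℝ) :
    ∑ j : Fin N, (if (j : ℕ) = i then A else if (j : ℕ) = i + 1 then B
      else if i = (j : ℕ) + 1 then D j else 0) * v j =
    A * v i + (if i + 1 < N then B * v (i + 1) else 0)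
      + (if 0 < i then D (i - 1) * v (i - 1) else 0) := by
  rw [Fin.sum_univ_eq_sum_range (fun j => (if j = i then A else if j = i + 1 then B
      else if i = j + 1 then D j else 0) * v j) N]
  have h : ∀ j ∈ Finset.range N, (if j = i then A else if j = i + 1 then B
      else if i = j + 1 then D j else 0) * v j =
      (if j = i then A * v i else 0) + (if j = i + 1 then B * v (i + 1) else 0)
       + (if j = i - 1 then (if 0 < i then D (i - 1) * v (i - 1) else 0) else 0) := by
    intro j _
    by_cases h1 : j = i
    · subst h1
      by_cases h2 : 0 < j
      · have : ¬ (j = j - 1) := by omega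
        simp [this]
      · simp [h2]
    · by_cases h2 : j = i + 1
      · have : ¬ (i + 1 = i - 1) := by omega
        subst h2
        simp [this]
      · by_cases h3 : i = j + 1
        · subst h3
          have h5 : ¬ (j = j + 1 + 1) := by omega
          simp [h5]
        · by_cases h4 : 0 < i
          · have : ¬ (j = i - 1) := by omega
            simp [h1, h2, h3, this]
          · simp [h1, h2, h3, h4]
  rw [Finset.sum_congr rfl h, Finset.sum_add_distrib, Finset.sum_add_distrib]
  have : i - 1 < N := by omega
  simp [Finset.sum_ite_eq', hi, this]

theorem wronski_aux (m : ℕ) (z : ℝ) (b c p q : ℕ → ℝ)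
    (hb : ∀ j, j ≤ m + 2 → b j = b (m + 2 - j))
    (hc : ∀ k, 1 ≤ k → k ≤ m + 2 → c k = c (m + 3 - k))
    (hp0 : p 0 = 1) (hp1 : p 1 = z - b 0)
    (hp : ∀ k, k ≤ m → p (k + 2) = (z - b (k + 1)) * p (k + 1) - c (k + 1) * p k)
    (hq0 : q 0 = 1) (hq1 : q 1 = z - b 1)
    (hq : ∀ k, k + 2 ≤ m + 1 → q (k + 2) = (z - b (k + 2)) * q (k + 1) - c (k + 2) * q k) :
    p (m + 2) = (z - b 0) * q (m + 1) - c 1 * q m := by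
  have key : ∀ k l, k + l = m → p (k + 1) * q (l + 1) - c (k + 1) * p k * q l =
      (z - b 0) * q (m + 1) - c 1 * q m := by
    intro k
    induction k with
    | zero =>
      intro l hl
      obtain rfl : l = m := by omega
      simp [hp0, hp1]
    | succ k ih =>
      intro l hl
      rw [← ih (l + 1) (by omega), hp k (by omega), hq l (by omega)]
      have e1 : b (k + 1) = b (l + 2) := by
        rw [hb (k + 1) (by omega)]; congr 1; omega
      have e2 : c (k + 1 + 1) = c (l + 2) := by
        rw [hc (k + 1 + 1) (by omega) (by omega)]; congr 1; omega
      rw [e1, e2]; ring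
  rw [← key m 0 (by omega), hp m le_rfl, hq0, hq1]
  have e1 : b (m + 1) = b 1 := by
    rw [hb (m + 1) (by omega)]; congr 1; omega
  rw [e1]; ring

theorem schur_aux (m : ℕ) (a b : ℕ → ℝ) (z : ℝ) (i : Fin (m + 1)) (v : ℕ → ℝ) :
    ∑ j : Fin (m + 1), (z • (1 : Matrix (Fin (m + 1)) (Fin (m + 1)) ℝ) -
        JDx m a b) i j * v j =
    (z - b (i + 1)) * v i - (if (i : ℕ) + 1 < m + 1 then a (i + 2) * v (i + 1) else 0)
      - (if 0 < (i : ℕ) then a (m + 2 - i) * v (i - 1) else 0) := by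
  have := tri_sum_aux (m + 1) i i.isLt (z - b (i + 1)) (- a (i + 2))
    (fun j => - a (m + 2 - (j + 1))) v
  have e : ∀ j : Fin (m + 1), (z • (1 : Matrix (Fin (m + 1)) (Fin (m + 1)) ℝ) -
        JDx m a b) i j = (if (j : ℕ) = i then z - b (i + 1)
        else if (j : ℕ) = i + 1 then - a (i + 2)
      else if (i : ℕ) = (j : ℕ) + 1 then - a (m + 2 - (j + 1)) else 0) := by
    intro j
    by_cases h : i = j
    · subst h
      simp [JDx, JDcs, Jcs]
    · have h' : ¬ (j : ℕ) = i := fun h2 => h (Fin.ext h2.symm)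
      have h3 : (z • (1 : Matrix (Fin (m + 1)) (Fin (m + 1)) ℝ)) i j = 0 := by
        simp [h]
      rw [Matrix.sub_apply, h3]
      simp only [JDx, JDcs, Jcs, Matrix.of_apply, add_left_inj, h', if_false, zero_sub]
      split_ifs <;> first | rfl | simp | omega
  simp only [e]
  rw [this]
  by_cases h1 : (i : ℕ) + 1 < m + 1 <;> by_cases h2 : 0 < (i : ℕ)
  all_goals simp only [h1, h2, if_true, if_false]
  all_goals try rw [show (i : ℕ) - 1 + 1 = i by omega]
  all_goals ring

/-- For `z` with `det(z·I − J^D_cs) ≠ 0`, the Schur complement of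
`J_cs` with respect to the boundary/interior decomposition satisfies
`z·I₂ − b(0)·I₂ − X̄₀·(z·I − J^D_cs)⁻¹·X₀ = φ(z)·(R(z)·I₂ − Δ₀)`, where
`R(z) = 1 − P_{n0}(z)/∏ a(i)`, `φ(z) = −(∏ a(i))/P^D_{n0−1}(z)` and `Δ₀ = !![1,−1;−1,1]`. -/
theorem statement_7 (n0 : ℕ) (hn0 : 2 ≤ n0) (a b : ℕ → ℝ)
    (ha : ∀ i, 1 ≤ i → i ≤ n0 → a i ≠ 0)
    (hb : ∀ j, j ≤ n0 → b j = b (n0 - j))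
    (P : ℕ → Polynomial ℝ)
    (hP0 : P 0 = 1) (hP1 : P 1 = X - C (b 0))
    (hP : ∀ k, 2 ≤ k → k ≤ n0 + 1 →
      P k = (X - C (b (k - 1))) * P (k - 1) - C (a (k - 1) * a (n0 + 2 - k)) * P (k - 2))
    (PD : ℕ → Polynomial ℝ)
    (hPD0 : PD 0 = 1) (hPD1 : PD 1 = X - C (b 1))
    (hPD : ∀ k, 2 ≤ k → k ≤ n0 - 1 →
      PD k = (X - C (b k)) * PD (k - 1) - C (a k * a (n0 + 1 - k)) * PD (k - 2)) :
    ∀ z : ℝ,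
      (z • (1 : Matrix (Fin (n0 - 1)) (Fin (n0 - 1)) ℝ) - JDcs n0 a b).det ≠ 0 →
      z • (1 : Matrix (Fin 2) (Fin 2) ℝ) - b 0 • (1 : Matrix (Fin 2) (Fin 2) ℝ) -
          Xbar0mat n0 a * (z • (1 : Matrix (Fin (n0 - 1)) (Fin (n0 - 1)) ℝ) - JDcs n0 a b)⁻¹ *
            X0mat n0 a =
        (-(∏ i ∈ Finset.Icc 1 n0, a i) / (PD (n0 - 1)).eval z) •
          ((1 - (P n0).eval z / ∏ i ∈ Finset.Icc 1 n0, a i) • (1 : Matrix (Fin 2) (Fin 2) ℝ) -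
            !![1, -1; -1, 1]) := by
  intro z hdet
  obtain ⟨m, rfl⟩ : ∃ m, n0 = m + 2 := ⟨n0 - 2, by omega⟩
  change (z • (1 : Matrix (Fin (m + 1)) (Fin (m + 1)) ℝ) - JDx m a b).det ≠ 0 at hdet
  set M : Matrix (Fin (m + 1)) (Fin (m + 1)) ℝ :=
    z • (1 : Matrix (Fin (m + 1)) (Fin (m + 1)) ℝ) - JDx m a b with hM
  set q : ℕ → ℝ := fun k => (PD k).eval z with hqd
  have hq0 : q 0 = 1 := by simp [hqd, hPD0]
  have hq1 : q 1 = z - b 1 := by simp [hqd, hPD1]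
  have hq : ∀ k, k + 2 ≤ m + 1 →
      q (k + 2) = (z - b (k + 2)) * q (k + 1) - (a (k + 2) * a (m + 3 - (k + 2))) * q k := by
    intro k hk
    simp only [hqd]
    rw [hPD (k + 2) (by omega) (by omega)]
    simp
  have hw := wronski_aux m z b (fun k => a k * a (m + 3 - k)) (fun k => (P k).eval z) q hb
    (by
      intro k h1 h2
      rw [show m + 3 - (m + 3 - k) = k by omega, mul_comm])
    (by simp [hP0]) (by simp [hP1])
    (by
      intro k hk
      rw [hP (k + 2) (by omega) (by omega)]
      rw [show m + 2 + 2 - (k + 2) = m + 3 - (k + 1) by omega]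
      simp)
    hq0 hq1 hq
  simp only [show m + 3 - 1 = m + 2 by omega] at hw
  set W : ℕ → ℝ := fun i => q i * ∏ j ∈ Finset.Icc (i + 2) (m + 2), a j with hW
  have hI : ∀ i, i ≤ m + 2 → ∏ j ∈ Finset.Icc i (m + 2), a j =
      a i * ∏ j ∈ Finset.Icc (i + 1) (m + 2), a j := by
    intro i hi
    rw [← Finset.insert_Icc_succ_left_eq_Icc hi, Finset.prod_insert (by simp)]
    rfl
  have hW0 : (z - b 1) * W 0 - a 2 * W 1 = 0 := by
    simp only [hW, hq0, hq1]
    rw [hI 2 (by omega)]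
    ring
  have hWs : ∀ k, k + 1 ≤ m → (z - b (k + 2)) * W (k + 1) - a (k + 3) * W (k + 2)
      - a (m + 2 - (k + 1)) * W k = 0 := by
    intro k hk
    simp only [hW]
    rw [hq k (by omega), hI (k + 2) (by omega), hI (k + 1 + 2) (by omega),
      show m + 3 - (k + 2) = m + 2 - (k + 1) by omega,
      show k + 1 + 2 = k + 3 by omega, show k + 2 + 2 = k + 3 + 1 by omega,
      show k + 2 + 1 = k + 3 by omega]
    ring
  have hWe : W (m + 1) = q (m + 1) := by
    simp [hW]
  have hWm : W m = q m * a (m + 2) := by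
    simp [hW]
  have hrow : ∀ i : Fin (m + 1), ∑ j : Fin (m + 1), M i j * W j =
      if (i : ℕ) = m then a (m + 2) * q (m + 1) else 0 := by
    intro i
    rw [hM, schur_aux]
    have hi := i.isLt
    generalize (i : ℕ) = k at hi
    rcases k with _ | k
    · by_cases h : 0 = m
      · subst h
        simp only [zero_add] at hWe ⊢
        rw [hWe] at hW0
        simp
        linarith
      · have : 0 < m := by omega
        simp [h, this]
        linarith
    · have : (z - b (k + 1 + 1)) * W (k + 1) - a (k + 1 + 2) * W (k + 1 + 1)
          - a (m + 2 - (k + 1)) * W k = 0 := hWs k (by omega)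
      by_cases h : k + 1 = m
      · subst h
        rw [show k + 1 + 2 - (k + 1) = 2 by omega] at this
        simp only [← hWe]
        simp
        linarith
      · have h2 : k + 1 < m := by omega
        rw [show m + 2 - (k + 1) = m + 1 - k by omega] at this
        simp [h, h2]
        linarith
  have hrow' : ∀ i : Fin (m + 1), ∑ j : Fin (m + 1), M i j * W (m - j) =
      if (i : ℕ) = 0 then a (m + 2) * q (m + 1) else 0 := by
    intro i
    have h1 := hrow (Fin.rev i)
    rw [hM, schur_aux] at h1
    rw [hM, schur_aux m a b z i (fun j => W (m - j))]
    have hi := i.isLt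
    rw [Fin.val_rev] at h1
    generalize (i : ℕ) = k at hi h1
    obtain ⟨l, rfl⟩ : ∃ l, m = k + l := ⟨m - k, by omega⟩
    have hbb : b (l + 1) = b (k + 1) := by
      rw [hb (l + 1) (by omega)]; congr 1; omega
    rw [show k + l + 1 - (k + 1) = l by omega] at h1
    rw [hbb, show k + l + 2 - l = k + 2 by omega] at h1
    rw [show k + l + 2 - k = l + 2 by omega, show k + l - k = l by omega,
      show k + l - (k + 1) = l - 1 by omega]
    rcases k with _ | k
    · rcases l with _ | l
      · simpa using h1
      · simpa using h1
    · rw [show k + 1 + l - (k + 1 - 1) = l + 1 by omega]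
      have hl : l ≠ k + 1 + l := by omega
      have hl2 : l + 1 < k + 1 + l + 1 := by omega
      simp only [hl, hl2, if_true, if_false] at h1
      rcases l with _ | l
      · simp at h1 ⊢
        linarith
      · simp at h1 ⊢
        linarith
  set U : Matrix (Fin (m + 1)) (Fin 2) ℝ :=
    Matrix.of fun i j => if (j : ℕ) = 0 then W (m - i) else W i with hU
  have hMU : M * U = q (m + 1) • X0x m a := by
    ext i j
    rw [Matrix.mul_apply]
    fin_cases j
    · have := hrow' i
      simp only [hU, X0x, X0mat, Matrix.of_apply, Matrix.smul_apply]
      simp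
      rw [this]
      simp only [Fin.val_eq_zero_iff]
      split_ifs <;> ring
    · have := hrow i
      simp only [hU, X0x, X0mat, Matrix.of_apply, Matrix.smul_apply]
      simp
      rw [this]
      split_ifs <;> ring
  have hunit : IsUnit M.det := isUnit_iff_ne_zero.mpr hdet
  have hUe : U = q (m + 1) • (M⁻¹ * X0x m a) := by
    rw [← Matrix.mul_smul, ← hMU, ← Matrix.mul_assoc, Matrix.nonsing_inv_mul _ hunit,
      Matrix.one_mul]
  have hW0v : W 0 = ∏ j ∈ Finset.Icc 2 (m + 2), a j := by
    simp [hW, hq0]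
  have hne : q (m + 1) ≠ 0 := by
    intro h0
    rw [h0, zero_smul] at hUe
    have h1 : U 0 1 = 0 := by rw [hUe]; rfl
    have h2 : U 0 1 = W 0 := by simp [hU]
    rw [h2, hW0v, Finset.prod_eq_zero_iff] at h1
    obtain ⟨j, hj, hj0⟩ := h1
    rw [Finset.mem_Icc] at hj
    exact ha j (by omega) hj.2 hj0
  have hV : M⁻¹ * X0x m a = (q (m + 1))⁻¹ • U := by
    rw [hUe, smul_smul, inv_mul_cancel₀ hne, one_smul]
  have hprod : ∏ j ∈ Finset.Icc 1 (m + 2), a j = a 1 * W 0 := by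
    rw [hW0v, hI 1 (by omega)]
  have hpne : ∏ j ∈ Finset.Icc 1 (m + 2), a j ≠ 0 := by
    rw [Finset.prod_ne_zero_iff]
    intro j hj
    rw [Finset.mem_Icc] at hj
    exact ha j hj.1 hj.2
  have hX0 : ∀ j : Fin 2, (Xbx m a * U) 0 j =
      a 1 * U 0 j := by
    intro j
    rw [Matrix.mul_apply, Finset.sum_eq_single (0 : Fin (m + 1))]
    · simp [Xbx, Xbar0mat]
    · intro k _ hk
      simp [Xbx, Xbar0mat, hk]
    · simp
  have hX1 : ∀ j : Fin 2, (Xbx m a * U) 1 j =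
      a 1 * U (Fin.last m) j := by
    intro j
    rw [Matrix.mul_apply, Finset.sum_eq_single (Fin.last m)]
    · simp [Xbx, Xbar0mat]
    · intro k _ hk
      have : (k : ℕ) ≠ m := fun h => hk (Fin.ext h)
      simp [Xbx, Xbar0mat, this]
    · simp
  change z • (1 : Matrix (Fin 2) (Fin 2) ℝ) - b 0 • (1 : Matrix (Fin 2) (Fin 2) ℝ) -
      Xbx m a * M⁻¹ *
        X0x m a =
      (-(∏ i ∈ Finset.Icc 1 (m + 2), a i) / q (m + 1)) •
          ((1 - (P (m + 2)).eval z / ∏ i ∈ Finset.Icc 1 (m + 2), a i) •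
            (1 : Matrix (Fin 2) (Fin 2) ℝ) - !![1, -1; -1, 1])
  rw [Matrix.mul_assoc, hV, Matrix.mul_smul, hw]
  have hdiag : z - b 0 - (q (m + 1))⁻¹ * (a 1 * W m) =
      (-(∏ i ∈ Finset.Icc 1 (m + 2), a i) / q (m + 1)) *
      (1 - ((z - b 0) * q (m + 1) - a 1 * a (m + 2) * q m) /
        (∏ i ∈ Finset.Icc 1 (m + 2), a i) - 1) := by
    rw [hWm]
    field_simp
    ring
  have hoff : - ((q (m + 1))⁻¹ * (a 1 * W 0)) =
      (-(∏ i ∈ Finset.Icc 1 (m + 2), a i) / q (m + 1)) := by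
    rw [hprod]
    field_simp
  ext i j
  rw [Matrix.sub_apply, Matrix.smul_apply ((q (m + 1))⁻¹)]
  fin_cases i <;> fin_cases j
  · change _ - (q (m + 1))⁻¹ • (Xbx m a * U) 0 0 = _
    rw [hX0]
    simpa [hU] using hdiag
  · change _ - (q (m + 1))⁻¹ • (Xbx m a * U) 0 1 = _
    rw [hX0]
    simpa [hU] using hoff
  · change _ - (q (m + 1))⁻¹ • (Xbx m a * U) 1 0 = _
    rw [hX1]
    simpa [hU] using hoff
  · change _ - (q (m + 1))⁻¹ • (Xbx m a * U) 1 1 = _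
    rw [hX1]
    simpa [hU] using hdiag
end

section
/- For every z ∈ ℂ, det(z·I − J_cs) · det(z·I − J^D_cs) = ( ∏_{i=1}^{n0} a(i) )² · R(z) · ( R(z) − 2 ) (all polynomials with real coefficients evaluated at complex z). Consequently, z is an eigenvalue of J_cs or of J^D_cs if and only if R(z) ∈ {0, 2}. -/
open Polynomial

def Gc (c d : ℕ → ℂ) : ℕ → ℂ
  | 0 => 1
  | 1 => c 0
  | (n + 2) => c (n + 1) * Gc c d (n + 1) - d n * Gc c d n

theorem Gc_front (n : ℕ) : ∀ (c d : ℕ → ℂ), Gc c d (n + 2) =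
    c 0 * Gc (fun i => c (i + 1)) (fun i => d (i + 1)) (n + 1)
      - d 0 * Gc (fun i => c (i + 2)) (fun i => d (i + 2)) n := by
  induction n using Nat.strong_induction_on with
  | _ n ih =>
    intro c d
    match n, ih with
    | 0, _ => simp [Gc]; ring
    | 1, _ => simp [Gc]; ring
    | (k + 2), ih =>
      rw [Gc, ih (k + 1) (by omega) c d, ih k (by omega) c d]
      simp only [Gc]
      ring

theorem Gc_rev (n : ℕ) : ∀ (c d c' d' : ℕ → ℂ),
    (∀ i, i < n → c' i = c (n - 1 - i)) → (∀ i, i + 1 < n → d' i = d (n - 2 - i)) →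
    Gc c' d' n = Gc c d n := by
  induction n using Nat.strong_induction_on with
  | _ n ih =>
    intro c d c' d' hc hd
    match n, ih, hc, hd with
    | 0, _, _, _ => simp [Gc]
    | 1, _, hc, _ => simp [Gc, hc 0 (by omega)]
    | (k + 2), ih, hc, hd =>
      rw [Gc_front, Gc, ih (k + 1) (by omega) c d, ih k (by omega) c d, hc 0 (by omega),
        hd 0 (by omega)]
      · rfl
      · intro i hi
        rw [hc _ (by omega)]; congr 1; omega
      · intro i hi
        rw [hd _ (by omega)]; congr 1; omega
      · intro i hi
        rw [hc _ (by omega)]; congr 1; omega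
      · intro i hi
        rw [hd _ (by omega)]; congr 1; omega

theorem Gc_wronsk (c d : ℕ → ℂ) (n : ℕ) :
    Gc c d (n + 2) * Gc (fun i => c (i + 1)) (fun i => d (i + 1)) n
      - Gc c d (n + 1) * Gc (fun i => c (i + 1)) (fun i => d (i + 1)) (n + 1)
      = - ∏ i ∈ Finset.range (n + 1), d i := by
  induction n with
  | zero => simp [Gc]; ring
  | succ k ih =>
    rw [Finset.prod_range_succ, ← neg_mul, ← ih]
    rw [show k + 1 + 2 = (k + 1) + 2 from rfl, Gc]
    simp only [Gc]
    ring

def tri (c u l : ℕ → ℂ) (n : ℕ) : Matrix (Fin n) (Fin n) ℂ :=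
  Matrix.of fun i j =>
    if (j : ℕ) = (i : ℕ) then c (i : ℕ)
    else if (j : ℕ) = (i : ℕ) + 1 then u (i : ℕ)
    else if (i : ℕ) = (j : ℕ) + 1 then l (j : ℕ)
    else 0

theorem tri_det_front (c u l : ℕ → ℂ) (n : ℕ) : (tri c u l (n + 2)).det =
    c 0 * (tri (fun i => c (i + 1)) (fun i => u (i + 1)) (fun i => l (i + 1)) (n + 1)).det
      - u 0 * l 0 *
        (tri (fun i => c (i + 2)) (fun i => u (i + 2)) (fun i => l (i + 2)) n).det := by
  have h1 : (tri c u l (n + 2)).submatrix Fin.succ (Fin.succAbove 0)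
      = tri (fun i => c (i + 1)) (fun i => u (i + 1)) (fun i => l (i + 1)) (n + 1) := by
    ext i j
    simp [tri]
  have h2 : ((tri c u l (n + 2)).submatrix Fin.succ (Fin.succAbove (Fin.succ 0))).det
      = l 0 * (tri (fun i => c (i + 2)) (fun i => u (i + 2)) (fun i => l (i + 2)) n).det := by
    rw [Matrix.det_succ_column_zero, Fin.sum_univ_succ, Finset.sum_eq_zero]
    · have h3 : ((tri c u l (n + 2)).submatrix Fin.succ (Fin.succAbove (Fin.succ 0))).submatrix
          (Fin.succAbove 0) Fin.succ
          = tri (fun i => c (i + 2)) (fun i => u (i + 2)) (fun i => l (i + 2)) n := by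
        ext i j
        simp [tri, Fin.succAbove, Fin.lt_def]
      rw [h3]
      simp [tri, Fin.succAbove, Fin.lt_def]
    · intro i _
      simp [tri, Fin.succAbove, Fin.lt_def]
  rw [Matrix.det_succ_row_zero, Fin.sum_univ_succ, Fin.sum_univ_succ, Finset.sum_eq_zero]
  · rw [h1, h2]
    simp [tri]
    ring
  · intro i _
    simp [tri]

theorem tri_det (n : ℕ) : ∀ (c u l : ℕ → ℂ),
    (tri c u l n).det = Gc c (fun i => u i * l i) n := by
  induction n using Nat.strong_induction_on with
  | _ n ih =>
    intro c u l
    match n, ih with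
    | 0, _ => simp [Gc]
    | 1, _ => simp [Gc, tri]
    | (k + 2), ih =>
      rw [tri_det_front, Gc_front, ih (k + 1) (by omega), ih k (by omega)]

/-- For every `z ∈ ℂ`,
`det(z·I − J_cs) · det(z·I − J^D_cs) = (∏ a(i))² · R(z) · (R(z) − 2)`, where
`R(z) = 1 − P_{n0}(z)/∏ a(i)`; consequently `z` is an eigenvalue of `J_cs` or of
`J^D_cs` iff `R(z) ∈ {0, 2}`. -/
theorem statement_8 (n0 : ℕ) (hn0 : 2 ≤ n0) (a b : ℕ → ℝ)
    (ha : ∀ i, 1 ≤ i → i ≤ n0 → a i ≠ 0)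
    (hb : ∀ j, j ≤ n0 → b j = b (n0 - j))
    (P : ℕ → Polynomial ℝ)
    (hP0 : P 0 = 1) (hP1 : P 1 = X - C (b 0))
    (hP : ∀ k, 2 ≤ k → k ≤ n0 + 1 →
      P k = (X - C (b (k - 1))) * P (k - 1) - C (a (k - 1) * a (n0 + 2 - k)) * P (k - 2))
    (PD : ℕ → Polynomial ℝ)
    (hPD0 : PD 0 = 1) (hPD1 : PD 1 = X - C (b 1))
    (hPD : ∀ k, 2 ≤ k → k ≤ n0 - 1 →
      PD k = (X - C (b k)) * PD (k - 1) - C (a k * a (n0 + 1 - k)) * PD (k - 2)) :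
    (∀ z : ℂ,
      (z • (1 : Matrix (Fin (n0 + 1)) (Fin (n0 + 1)) ℂ) - (Jcs n0 a b).map Complex.ofReal).det *
        (z • (1 : Matrix (Fin (n0 - 1)) (Fin (n0 - 1)) ℂ) - (JDcs n0 a b).map Complex.ofReal).det
      = (∏ i ∈ Finset.Icc 1 n0, (a i : ℂ)) ^ 2 *
          (1 - Polynomial.aeval z (P n0) / ∏ i ∈ Finset.Icc 1 n0, (a i : ℂ)) *
          ((1 - Polynomial.aeval z (P n0) / ∏ i ∈ Finset.Icc 1 n0, (a i : ℂ)) - 2)) ∧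
    (∀ z : ℂ,
      ((z • (1 : Matrix (Fin (n0 + 1)) (Fin (n0 + 1)) ℂ) -
          (Jcs n0 a b).map Complex.ofReal).det = 0 ∨
        (z • (1 : Matrix (Fin (n0 - 1)) (Fin (n0 - 1)) ℂ) -
          (JDcs n0 a b).map Complex.ofReal).det = 0) ↔
      (1 - Polynomial.aeval z (P n0) / ∏ i ∈ Finset.Icc 1 n0, (a i : ℂ)) ∈ ({0, 2} : Set ℂ)) := by
  obtain ⟨m, rfl⟩ : ∃ m, n0 = m + 1 := ⟨n0 - 1, by omega⟩
  have hA : (∏ i ∈ Finset.Icc 1 (m + 1), (a i : ℂ)) ≠ 0 := by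
    rw [Finset.prod_ne_zero_iff]
    intro i hi
    rw [Finset.mem_Icc] at hi
    exact_mod_cast ha i hi.1 hi.2
  have key : ∀ z : ℂ,
      (z • (1 : Matrix (Fin (m + 1 + 1)) (Fin (m + 1 + 1)) ℂ) -
          (Jcs (m + 1) a b).map Complex.ofReal).det *
        (z • (1 : Matrix (Fin (m + 1 - 1)) (Fin (m + 1 - 1)) ℂ) -
          (JDcs (m + 1) a b).map Complex.ofReal).det
      = (∏ i ∈ Finset.Icc 1 (m + 1), (a i : ℂ)) ^ 2 *
          (1 - Polynomial.aeval z (P (m + 1)) / ∏ i ∈ Finset.Icc 1 (m + 1), (a i : ℂ)) *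
          ((1 - Polynomial.aeval z (P (m + 1)) / ∏ i ∈ Finset.Icc 1 (m + 1), (a i : ℂ)) - 2) := by
    intro z
    set c : ℕ → ℂ := fun i => z - b i with hc
    set u : ℕ → ℂ := fun i => -(a (i + 1) : ℂ) with hu
    set l : ℕ → ℂ := fun i => -(a (m + 1 - i) : ℂ) with hl
    have e1 : z • (1 : Matrix (Fin (m + 1 + 1)) (Fin (m + 1 + 1)) ℂ) -
          (Jcs (m + 1) a b).map Complex.ofReal = tri c u l (m + 2) := by
      ext i j
      simp only [Matrix.sub_apply, Matrix.smul_apply, Matrix.one_apply, Matrix.map_apply, Jcs, tri,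
        Matrix.of_apply, hc, hu, hl, Fin.ext_iff, smul_eq_mul]
      split_ifs <;> first | omega | simp
    have e2 : z • (1 : Matrix (Fin (m + 1 - 1)) (Fin (m + 1 - 1)) ℂ) -
          (JDcs (m + 1) a b).map Complex.ofReal
          = tri (fun i => c (i + 1)) (fun i => u (i + 1)) (fun i => l (i + 1)) m := by
      ext i j
      simp only [Matrix.sub_apply, Matrix.smul_apply, Matrix.one_apply, Matrix.map_apply, Jcs,
        JDcs, tri, Matrix.of_apply, hc, hu, hl, Fin.ext_iff, smul_eq_mul]
      split_ifs <;> first | omega | simp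
    have hPG : ∀ k, k ≤ m + 2 → aeval z (P k) = Gc c (fun i => u i * l i) k := by
      intro k
      induction k using Nat.strong_induction_on with
      | _ k ih =>
        intro hk
        match k, ih, hk with
        | 0, _, _ => simp [Gc, hP0]
        | 1, _, _ => simp [Gc, hP1, hc]
        | (k + 2), ih, hk =>
          rw [hP (k + 2) (by omega) (by omega), Gc, ← ih (k + 1) (by omega) (by omega),
            ← ih k (by omega) (by omega)]
          have : m + 1 + 2 - (k + 2) = m + 1 - k := by omega
          simp [hc, hu, hl, this]
    have hrev : Gc (fun i => c (i + 1)) (fun i => u (i + 1) * l (i + 1)) (m + 1)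
        = Gc c (fun i => u i * l i) (m + 1) := by
      apply Gc_rev
      · intro i hi
        simp only [hc]
        rw [hb (i + 1) (by omega)]
        congr 3; omega
      · intro i hi
        simp only [hu, hl]
        rw [show m + 1 - (i + 1) = m + 1 - 2 - i + 1 by omega,
          show m + 1 - (m + 1 - 2 - i) = i + 1 + 1 by omega]
        ring
    have hprod : ∏ i ∈ Finset.range (m + 1), (u i * l i)
        = (∏ i ∈ Finset.Icc 1 (m + 1), (a i : ℂ)) ^ 2 := by
      have e : ∏ i ∈ Finset.Icc 1 (m + 1), (a i : ℂ)
          = ∏ i ∈ Finset.range (m + 1), (a (i + 1) : ℂ) := by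
        rw [Finset.range_eq_Ico, Finset.prod_Ico_add' (fun i => (a i : ℂ)) 0 (m + 1) 1]
        rfl
      have e' := Finset.prod_range_reflect (fun i => (a (i + 1) : ℂ)) (m + 1)
      rw [e, sq]
      nth_rewrite 2 [← e']
      rw [← Finset.prod_mul_distrib]
      apply Finset.prod_congr rfl
      intro i hi
      rw [Finset.mem_range] at hi
      simp only [hu, hl]
      rw [show m + 1 - 1 - i + 1 = m + 1 - i by omega]
      ring
    have W := Gc_wronsk c (fun i => u i * l i) m
    rw [hprod, hrev, ← hPG (m + 1) (by omega)] at W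
    rw [e1, e2, tri_det, tri_det]
    rw [sub_eq_iff_eq_add] at W
    rw [W]
    field_simp
    ring
  refine ⟨key, fun z => ?_⟩
  rw [← mul_eq_zero, key z]
  simp only [mul_eq_zero, pow_eq_zero_iff, ne_eq, OfNat.ofNat_ne_zero, not_false_eq_true, hA, false_or, sub_eq_zero, Set.mem_insert_iff, Set.mem_singleton_iff]
end

section
/- If z ∈ ℂ satisfies det(z·I − J_cs) = 0 and det(z·I − J^D_cs) = 0 (i.e. z is a common eigenvalue of J_cs and J^D_cs), then z is a critical point of the spectral decimation function, i.e. R′(z) = 0. -/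
open Polynomial

/-- continuant, expanded from the front -/
def Kont {R : Type*} [CommRing R] : ℕ → (ℕ → R) → (ℕ → R) → R
  | 0, _, _ => 1
  | 1, b, _ => b 0
  | (n + 2), b, c => b 0 * Kont (n + 1) (fun i => b (i + 1)) (fun i => c (i + 1))
      - c 0 * Kont n (fun i => b (i + 2)) (fun i => c (i + 2))

theorem Kont_last {R : Type*} [CommRing R] : ∀ (n : ℕ) (b c : ℕ → R),
    Kont (n + 2) b c = b (n + 1) * Kont (n + 1) b c - c n * Kont n b c
  | 0, b, c => by simp [Kont]; ring
  | 1, b, c => by simp [Kont]; ring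
  | (n + 2), b, c => by
    rw [Kont, Kont_last (n + 1) (fun i => b (i + 1)), Kont_last n (fun i => b (i + 2))]
    rw [show Kont (n + 2 + 1) b c = _ from Kont.eq_3 b c (n + 1), Kont.eq_3 b c n]
    ring

theorem Kont_rev {R : Type*} [CommRing R] : ∀ (n : ℕ) (b c b' c' : ℕ → R),
    (∀ i, i < n → b' i = b (n - 1 - i)) → (∀ i, i + 1 < n → c' i = c (n - 2 - i)) →
    Kont n b' c' = Kont n b c
  | 0, b, c, b', c', _, _ => by simp [Kont]
  | 1, b, c, b', c', h, _ => by simpa [Kont] using h 0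
  | (n + 2), b, c, b', c', h, h' => by
    rw [Kont_last n b c, Kont, h 0 (by omega), h' 0 (by omega),
      Kont_rev (n + 1) b c, Kont_rev n b c]
    · simp
    · intro i hi
      rw [h _ (by omega)]; congr 1; omega
    · intro i hi
      rw [h' _ (by omega)]; congr 1; omega
    · intro i hi
      rw [h _ (by omega)]; congr 1; omega
    · intro i hi
      rw [h' _ (by omega)]; congr 1; omega

theorem Kont_wronskian {R : Type*} [CommRing R] (b c : ℕ → R) : ∀ n : ℕ,
    Kont (n + 1) b c * Kont (n + 1) (fun i => b (i + 1)) (fun i => c (i + 1))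
      - Kont (n + 2) b c * Kont n (fun i => b (i + 1)) (fun i => c (i + 1))
      = ∏ i ∈ Finset.range (n + 1), c i
  | 0 => by simp [Kont]
  | (n + 1) => by
    rw [Finset.prod_range_succ, ← Kont_wronskian b c n, Kont_last (n + 1) b c,
      Kont_last n (fun i => b (i + 1))]
    ring

theorem Kont_map {R S : Type*} [CommRing R] [CommRing S] (f : R →+* S) :
    ∀ (n : ℕ) (b c : ℕ → R),
    f (Kont n b c) = Kont n (fun i => f (b i)) (fun i => f (c i))
  | 0, b, c => by simp [Kont]
  | 1, b, c => by simp [Kont]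
  | (n + 2), b, c => by simp [Kont, Kont_map f (n + 1), Kont_map f n]

/-- tridiagonal matrix -/
def triM {R : Type*} [CommRing R] (n : ℕ) (b u l : ℕ → R) : Matrix (Fin n) (Fin n) R :=
  Matrix.of fun i j =>
    if (j : ℕ) = (i : ℕ) then b (i : ℕ)
    else if (j : ℕ) = (i : ℕ) + 1 then u (i : ℕ)
    else if (i : ℕ) = (j : ℕ) + 1 then l (j : ℕ)
    else 0

theorem triM_det {R : Type*} [CommRing R] : ∀ (n : ℕ) (b u l : ℕ → R),
    (triM n b u l).det = Kont n b (fun i => u i * l i)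
  | 0, b, u, l => by simp [Kont]
  | 1, b, u, l => by simp [Kont, triM]
  | (n + 2), b, u, l => by
    rw [Matrix.det_succ_row_zero, Fin.sum_univ_succ, Fin.sum_univ_succ]
    rw [Finset.sum_eq_zero (s := (Finset.univ : Finset (Fin n)))]
    · have h1 : (triM (n + 2) b u l).submatrix Fin.succ (Fin.succAbove 0)
          = triM (n + 1) (fun i => b (i + 1)) (fun i => u (i + 1)) (fun i => l (i + 1)) := by
        ext i j; simp [triM]
      have h2 : ((triM (n + 2) b u l).submatrix Fin.succ (Fin.succAbove (Fin.succ 0))).det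
          = l 0 * (triM n (fun i => b (i + 2)) (fun i => u (i + 2)) (fun i => l (i + 2))).det := by
        rw [Matrix.det_succ_column_zero, Fin.sum_univ_succ, Finset.sum_eq_zero]
        · have : ((triM (n + 2) b u l).submatrix Fin.succ (Fin.succAbove (Fin.succ 0))).submatrix
              (Fin.succAbove 0) Fin.succ
              = triM n (fun i => b (i + 2)) (fun i => u (i + 2)) (fun i => l (i + 2)) := by
            ext i j; simp [triM]
          rw [this]
          simp [triM]
        · intro i _
          simp [triM]
      rw [h1, h2, triM_det (n + 1), triM_det n, Kont]
      simp [triM]; ring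
    · intro i _
      simp [triM]

/-- If `z ∈ ℂ` is a common eigenvalue of `J_cs` and `J^D_cs`
(i.e. `det(z·I − J_cs) = 0` and `det(z·I − J^D_cs) = 0`), then `z` is a critical point
of the spectral decimation function `R = 1 − (∏ a(i))⁻¹ · P_{n0}`, i.e. `R′(z) = 0`. -/
theorem statement_9 (n0 : ℕ) (hn0 : 2 ≤ n0) (a b : ℕ → ℝ)
    (ha : ∀ i, 1 ≤ i → i ≤ n0 → a i ≠ 0)
    (hb : ∀ j, j ≤ n0 → b j = b (n0 - j))
    (P : ℕ → Polynomial ℝ)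
    (hP0 : P 0 = 1) (hP1 : P 1 = X - C (b 0))
    (hP : ∀ k, 2 ≤ k → k ≤ n0 + 1 →
      P k = (X - C (b (k - 1))) * P (k - 1) - C (a (k - 1) * a (n0 + 2 - k)) * P (k - 2))
    (PD : ℕ → Polynomial ℝ)
    (hPD0 : PD 0 = 1) (hPD1 : PD 1 = X - C (b 1))
    (hPD : ∀ k, 2 ≤ k → k ≤ n0 - 1 →
      PD k = (X - C (b k)) * PD (k - 1) - C (a k * a (n0 + 1 - k)) * PD (k - 2)) :
    ∀ z : ℂ,
      (z • (1 : Matrix (Fin (n0 + 1)) (Fin (n0 + 1)) ℂ) -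
        (Jcs n0 a b).map Complex.ofReal).det = 0 →
      (z • (1 : Matrix (Fin (n0 - 1)) (Fin (n0 - 1)) ℂ) -
        (JDcs n0 a b).map Complex.ofReal).det = 0 →
      Polynomial.aeval z
        (Polynomial.derivative (1 - C (∏ i ∈ Finset.Icc 1 n0, a i)⁻¹ * P n0)) = 0 := by
  intro z h1 h2
  obtain ⟨m, rfl⟩ : ∃ m, n0 = m + 1 := ⟨n0 - 1, by omega⟩
  set B : ℕ → ℝ[X] := fun i => X - C (b i) with hB
  set G : ℕ → ℝ[X] := fun i => C (a (i + 1) * a (m + 1 - i)) with hG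
  have hPK : ∀ k, k ≤ m + 1 → P k = Kont k B G ∧ P (k + 1) = Kont (k + 1) B G := by
    intro k
    induction k with
    | zero => intro _; simp [hP0, hP1, Kont, hB]
    | succ k ih =>
      intro hk
      obtain ⟨e1, e2⟩ := ih (by omega)
      refine ⟨e2, ?_⟩
      rw [Kont_last, hP (k + 1 + 1) (by omega) (by omega), ← e1, ← e2]
      simp only [hB, hG]
      rw [show m + 1 + 2 - (k + 1 + 1) = m + 1 - k by omega]
      simp
  have hw := Kont_wronskian B G m
  have hrev : Kont (m + 1) (fun i => B (i + 1)) (fun i => G (i + 1)) = Kont (m + 1) B G := by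
    symm
    apply Kont_rev
    · intro i hi
      simp only [hB]
      rw [hb i (by omega)]; congr 3; omega
    · intro i hi
      simp only [hG]
      rw [mul_comm]; congr 3 <;> omega
  rw [hrev] at hw
  set p := ∏ i ∈ Finset.Icc 1 (m + 1), a i with hp
  have hp0 : p ≠ 0 := Finset.prod_ne_zero_iff.2 fun i hi => by
    rw [Finset.mem_Icc] at hi; exact ha i hi.1 hi.2
  have hprod : ∏ i ∈ Finset.range (m + 1), G i = C (p * p) := by
    have e1 : p = ∏ i ∈ Finset.range (m + 1), a (i + 1) := by
      rw [hp]
      generalize m + 1 = k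
      induction k with
      | zero => simp
      | succ k ih => rw [Finset.prod_Icc_succ_top (by omega), ih, Finset.prod_range_succ]
    have e2 : p = ∏ i ∈ Finset.range (m + 1), a (m + 1 - i) := by
      rw [e1, ← Finset.prod_range_reflect]
      apply Finset.prod_congr rfl
      intro i hi
      rw [Finset.mem_range] at hi
      congr 1; omega
    simp only [hG]
    rw [← map_prod, Finset.prod_mul_distrib, ← e1, ← e2]
  rw [hprod] at hw
  have d1 : aeval z (Kont (m + 2) B G) = 0 := by
    have := Kont_map (aeval z : ℝ[X] →ₐ[ℝ] ℂ).toRingHom (m + 2) B G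
    simp only [AlgHom.toRingHom_eq_coe, RingHom.coe_coe] at this
    rw [this, ← h1]
    have hM : (z • (1 : Matrix (Fin (m + 1 + 1)) (Fin (m + 1 + 1)) ℂ) -
        (Jcs (m + 1) a b).map Complex.ofReal) = triM (m + 2) (fun i => z - b i)
          (fun i => - (a (i + 1) : ℂ)) (fun i => - (a (m + 1 - i) : ℂ)) := by
      ext i j
      simp only [triM, Jcs, Matrix.sub_apply, Matrix.smul_apply, Matrix.map_apply,
        Matrix.of_apply, Matrix.one_apply, Fin.ext_iff, smul_eq_mul]
      split_ifs <;> first | omega | simp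
    rw [hM, triM_det]
    simp [hB, hG]
  have d2 : aeval z (Kont m (fun i => B (i + 1)) (fun i => G (i + 1))) = 0 := by
    have := Kont_map (aeval z : ℝ[X] →ₐ[ℝ] ℂ).toRingHom m
      (fun i => B (i + 1)) (fun i => G (i + 1))
    simp only [AlgHom.toRingHom_eq_coe, RingHom.coe_coe] at this
    rw [this, ← h2]
    have hM : (z • (1 : Matrix (Fin (m + 1 - 1)) (Fin (m + 1 - 1)) ℂ) -
        (JDcs (m + 1) a b).map Complex.ofReal) = triM m (fun i => z - b (i + 1))
          (fun i => - (a (i + 1 + 1) : ℂ)) (fun i => - (a (m + 1 - (i + 1)) : ℂ)) := by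
      ext i j
      simp only [triM, JDcs, Jcs, Matrix.sub_apply, Matrix.smul_apply, Matrix.map_apply,
        Matrix.of_apply, Matrix.one_apply, Fin.ext_iff, smul_eq_mul]
      split_ifs <;> first | omega | simp
    rw [hM]
    refine Eq.trans ?_ (triM_det m _ _ _).symm
    simp [hB, hG]
  rw [(hPK (m + 1) le_rfl).1]
  set Q := Kont (m + 1) B G
  have v := congrArg (aeval z) hw
  have dv := congrArg (fun q => aeval z (derivative q)) hw
  simp only [map_sub, map_mul, derivative_mul, map_add, d1, d2, derivative_C,
    map_zero, aeval_C] at v dv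
  have hpc : (algebraMap ℝ ℂ) p ≠ 0 := by simpa using hp0
  have hQ : aeval z Q ≠ 0 := by
    intro h
    rw [h] at v
    apply mul_ne_zero hpc hpc
    simpa using v.symm
  have hd : aeval z (derivative Q) = 0 := by
    have : aeval z (derivative Q) * aeval z Q = 0 := by
      linear_combination dv / 2
    exact (mul_eq_zero.1 this).resolve_right hQ
  simp [hd]
end

section
/- If z_c ∈ ℝ is a critical point of the spectral decimation function, i.e. R′(z_c) = 0, then R(z_c) ∉ (0,2), that is, R(z_c) ≤ 0 or R(z_c) ≥ 2. -/
open Polynomial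


/-- second solution of the recurrence -/
noncomputable def qsol (b c : ℕ → ℝ) : ℕ → Polynomial ℝ
  | 0 => 0
  | 1 => 1
  | (k+2) => (X - C (b (k+1))) * qsol b c (k+1) - C (c (k+1)) * qsol b c k

lemma prod_pair (n : ℕ) (a : ℕ → ℝ) :
    ∏ i ∈ Finset.Icc 1 n, (a i * a (n + 1 - i)) = (∏ i ∈ Finset.Icc 1 n, a i) ^ 2 := by
  rw [Finset.prod_mul_distrib, sq]
  congr 1
  refine Finset.prod_bij' (fun i _ => n + 1 - i) (fun i _ => n + 1 - i) ?_ ?_ ?_ ?_ ?_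
  · intro i hi; simp only [Finset.mem_Icc] at *; omega
  · intro i hi; simp only [Finset.mem_Icc] at *; omega
  · intro i hi; simp only [Finset.mem_Icc] at *; omega
  · intro i hi; simp only [Finset.mem_Icc] at *; omega
  · intro i hi; rfl

lemma key (n : ℕ) (hn : 2 ≤ n) (b c : ℕ → ℝ) (P : ℕ → Polynomial ℝ)
    (hc : ∀ k, 1 ≤ k → k ≤ n → 0 < c k)
    (hcs : ∀ k, 1 ≤ k → k ≤ n → c (n + 1 - k) = c k)
    (hb : ∀ j, j ≤ n → b j = b (n - j))
    (hP0 : P 0 = 1) (hP1 : P 1 = X - C (b 0))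
    (hP : ∀ k, k + 1 ≤ n →
      P (k+2) = (X - C (b (k+1))) * P (k+1) - C (c (k+1)) * P k)
    (z : ℝ) (hz : (derivative (P n)).eval z = 0) :
    ∏ i ∈ Finset.Icc 1 n, c i ≤ ((P n).eval z) ^ 2 := by
  obtain ⟨q, hq⟩ : ∃ q, q = qsol b c := ⟨_, rfl⟩
  have q0 : q 0 = 0 := by rw [hq]; rfl
  have q1 : q 1 = 1 := by rw [hq]; rfl
  have q2 : ∀ k, q (k+2) = (X - C (b (k+1))) * q (k+1) - C (c (k+1)) * q k := by
    intro k; rw [hq]; rfl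
  -- Wronskian
  have hW : ∀ k, k ≤ n → P k * q (k+1) - P (k+1) * q k = C (∏ i ∈ Finset.Icc 1 k, c i) := by
    intro k
    induction k with
    | zero => intro _; simp [hP0, q0, q1]
    | succ k ih =>
      intro hk
      have := ih (by omega)
      rw [Finset.prod_Icc_succ_top (by omega), C_mul, ← this, q2, hP k hk]
      ring
  have hF : ∀ j, j + 1 ≤ n →
      q (j+1) * P (n-j) - C (c (j+1)) * q j * P (n-(j+1)) = P n := by
    intro j
    induction j with
    | zero => intro _; simp [q0, q1]
    | succ j ih =>
      intro hj
      rw [← ih (by omega), q2]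
      obtain ⟨m, rfl⟩ : ∃ m, n = m + (j+2) := ⟨n-(j+2), by omega⟩
      have e1 : m + (j+2) - (j+1) = m + 1 := by omega
      have e2 : m + (j+2) - (j+1+1) = m := by omega
      have e3 : m + (j+2) - j = m + 2 := by omega
      have h1 := hb (j+1) (by omega)
      have h2 := hcs (j+2) (by omega) (by omega)
      have e4 : m + (j+2) + 1 - (j+2) = m + 1 := by omega
      rw [e4] at h2
      rw [e1] at h1
      rw [e1, e2, e3, hP m (by omega), h1, h2]
      ring
  have hsym : q (n+1) = P n := by
    obtain ⟨m, rfl⟩ : ∃ m, n = m + 1 := ⟨n-1, by omega⟩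
    have h := hF m (by omega)
    have h1 := hb (m+1) le_rfl
    rw [← h, q2, h1]
    simp [hP0, hP1]
    ring
  have hWn := hW n le_rfl
  rw [hsym] at hWn
  have hWd := congrArg (fun p => (derivative p).eval z) hWn
  have hWe := congrArg (fun p => p.eval z) hWn
  simp only [derivative_sub, derivative_mul, derivative_C, eval_sub, eval_add, eval_mul, eval_C,
    eval_zero, hz] at hWd hWe
  have hA : ∀ k, k ≤ n → 0 < (derivative (P (k+1))).eval z * (P k).eval z
      - (derivative (P k)).eval z * (P (k+1)).eval z := by
    intro k
    induction k with
    | zero => intro _; simp [hP0, hP1]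
    | succ k ih =>
      intro hk
      have h := mul_pos (hc (k+1) (by omega) hk) (ih (by omega))
      rw [hP k hk]
      simp only [derivative_sub, derivative_mul, derivative_C, derivative_X, eval_sub, eval_add,
        eval_mul, eval_C, eval_zero, eval_one, eval_X]
      nlinarith [sq_nonneg ((P (k+1)).eval z)]
  have hB : ∀ k, k + 1 ≤ n → 0 < (derivative (q (k+2))).eval z * (q (k+1)).eval z
      - (derivative (q (k+1))).eval z * (q (k+2)).eval z := by
    intro k
    induction k with
    | zero => intro _; simp [q0, q1, q2]
    | succ k ih =>
      intro hk
      have h := mul_pos (hc (k+2) (by omega) hk) (ih (by omega))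
      rw [q2 (k+1)]
      simp only [derivative_sub, derivative_mul, derivative_C, derivative_X, eval_sub, eval_add,
        eval_mul, eval_C, eval_zero, eval_one, eval_X]
      nlinarith [sq_nonneg ((q (k+2)).eval z)]
  have hAn := hA n le_rfl
  have hBn := hB (n-1) (by omega)
  rw [show n - 1 + 2 = n + 1 by omega, show n - 1 + 1 = n by omega, hsym] at hBn
  rw [hz] at hAn hBn
  generalize (P n).eval z = p at *
  generalize (P (n+1)).eval z = r at *
  generalize (q n).eval z = s at *
  generalize (derivative (P (n+1))).eval z = D at *
  generalize (derivative (q n)).eval z = E at *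
  rw [← hWe]
  have h1 : (D * p) * s = (-(E * p)) * r := by linear_combination (-p) * hWd
  have h2 : 0 < D * p := by linarith
  have h3 : 0 < -(E * p) := by linarith
  have h4 : 0 ≤ (D * p) * (r * s) := by
    have : (D * p) * (r * s) = (-(E * p)) * r ^ 2 := by linear_combination r * h1
    rw [this]; positivity
  have h5 := nonneg_of_mul_nonneg_right h4 h2
  nlinarith

/-- If `z_c ∈ ℝ` is a critical point of the spectral decimation
function `R = 1 − (∏ a(i))⁻¹ · P_{n0}` (i.e. `R′(z_c) = 0`), then `R(z_c) ∉ (0, 2)`. -/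
theorem statement_10 (n0 : ℕ) (hn0 : 2 ≤ n0) (a b : ℕ → ℝ)
    (ha : ∀ i, 1 ≤ i → i ≤ n0 → a i ≠ 0)
    (hb : ∀ j, j ≤ n0 → b j = b (n0 - j))
    (hpos : ∀ j, 1 ≤ j → j ≤ n0 → 0 < a j * a (n0 + 1 - j))
    (P : ℕ → Polynomial ℝ)
    (hP0 : P 0 = 1) (hP1 : P 1 = X - C (b 0))
    (hP : ∀ k, 2 ≤ k → k ≤ n0 + 1 →
      P k = (X - C (b (k - 1))) * P (k - 1) - C (a (k - 1) * a (n0 + 2 - k)) * P (k - 2))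
    (zc : ℝ)
    (hcrit : (Polynomial.derivative
      (1 - C (∏ i ∈ Finset.Icc 1 n0, a i)⁻¹ * P n0)).eval zc = 0) :
    (1 - C (∏ i ∈ Finset.Icc 1 n0, a i)⁻¹ * P n0).eval zc ≤ 0 ∨
    2 ≤ (1 - C (∏ i ∈ Finset.Icc 1 n0, a i)⁻¹ * P n0).eval zc := by
  have hA0 : (∏ i ∈ Finset.Icc 1 n0, a i) ≠ 0 := by
    refine Finset.prod_ne_zero_iff.mpr fun i hi => ?_
    rw [Finset.mem_Icc] at hi
    exact ha i hi.1 hi.2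
  have hd : (derivative (P n0)).eval zc = 0 := by
    simpa [hA0] using hcrit
  have h := key n0 hn0 b (fun k => a k * a (n0 + 1 - k)) P hpos
    (by
      intro k h1 h2
      have : n0 + 1 - (n0 + 1 - k) = k := by omega
      simp only [this]
      ring) hb hP0 hP1
    (by
      intro k hk
      have := hP (k+2) (by omega) (by omega)
      rw [show k + 2 - 1 = k + 1 by omega, show n0 + 2 - (k + 2) = n0 + 1 - (k + 1) by omega,
        show k + 2 - 2 = k by omega] at this
      exact this) zc hd
  rw [prod_pair] at h
  simp only [eval_sub, eval_one, eval_mul, eval_C]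
  generalize (∏ i ∈ Finset.Icc 1 n0, a i) = A at *
  generalize (P n0).eval zc = p at *
  have h1 : 1 ≤ (A⁻¹ * p) ^ 2 := by
    have : (A⁻¹ * p) ^ 2 = p ^ 2 / A ^ 2 := by field_simp
    rw [this, one_le_div (by positivity)]
    exact h
  by_contra hcon
  push Not at hcon
  nlinarith
end

section
/- For every y ∈ (0,2), the equation R(x) = y has exactly n0 distinct real solutions x; in particular the n0 branches of the inverse of the spectral decimation function are defined on (0,2). -/
open Polynomial

lemma sgn_prod (r : ℕ → ℝ) (x : ℝ) (j : ℕ) : ∀ k : ℕ, j ≤ k → (∀ i, i < j → r i < x) →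
    (∀ i, j ≤ i → i < k → x < r i) →
    0 < (-1 : ℝ) ^ (k - j) * ∏ i ∈ Finset.range k, (x - r i) := by
  intro k hk
  induction k, hk using Nat.le_induction with
  | base =>
    intro h1 _
    simp only [Nat.sub_self, pow_zero, one_mul]
    exact Finset.prod_pos fun i hi => sub_pos.2 (h1 i (Finset.mem_range.1 hi))
  | succ k hk ih =>
    intro h1 h2
    have h3 := ih h1 (fun i hi hik => h2 i hi (by omega))
    have h4 := h2 k hk (by omega)
    rw [Finset.prod_range_succ, Nat.succ_sub hk, pow_succ]
    have := mul_pos h3 (sub_pos.2 h4)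
    nlinarith

lemma sm_of_inter (u t : ℕ → ℝ) (m : ℕ) (h1 : ∀ i, i < m → u i < t i)
    (h2 : ∀ i, i < m → t i < u (i + 1)) : ∀ i j, i < j → j < m → t i < t j := by
  intro i j hij
  induction j, hij using Nat.le_induction with
  | base => intro hj; exact (h2 i (by omega)).trans (h1 (i+1) hj)
  | succ k hk ih =>
    intro hj
    exact (ih (by omega)).trans ((h2 k (by omega)).trans (h1 (k+1) hj))

lemma core (Q : Polynomial ℝ) (m : ℕ) (hQ : Q.Monic) (hd : Q.natDegree = m) (u : ℕ → ℝ)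
    (hu : ∀ i, i < m → u i < u (i + 1))
    (hs : ∀ i, i ≤ m → 0 < (-1 : ℝ) ^ (m - i) * Q.eval (u i)) :
    ∃ t : ℕ → ℝ, Q = ∏ i ∈ Finset.range m, (X - C (t i)) ∧
      (∀ i, i < m → u i < t i) ∧ (∀ i, i < m → t i < u (i + 1)) := by
  have hex : ∀ i, ∃ t, i < m → (Q.eval t = 0 ∧ u i < t ∧ t < u (i + 1)) := by
    intro i
    by_cases hi : i < m
    · have hA := hs i hi.le
      have hB := hs (i + 1) hi
      obtain ⟨d, rfl⟩ : ∃ d, m = i + 1 + d := ⟨m - (i+1), by omega⟩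
      have e1 : i + 1 + d - i = d + 1 := by omega
      have e2 : i + 1 + d - (i + 1) = d := by omega
      rw [e1, pow_succ] at hA
      rw [e2] at hB
      have hc : ContinuousOn (fun x => (-1 : ℝ) ^ d * Q.eval x) (Set.Icc (u i) (u (i+1))) := by
        fun_prop
      obtain ⟨t, ht, ht0⟩ := intermediate_value_Ioo (hu i hi).le hc
        (show (0:ℝ) ∈ Set.Ioo _ _ from ⟨by linarith, hB⟩)
      refine ⟨t, fun _ => ⟨?_, ht.1, ht.2⟩⟩
      simpa using ht0
    · exact ⟨0, fun h => absurd h hi⟩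
  choose t ht using hex
  have h1 : ∀ i, i < m → u i < t i := fun i hi => (ht i hi).2.1
  have h2 : ∀ i, i < m → t i < u (i + 1) := fun i hi => (ht i hi).2.2
  refine ⟨t, ?_, h1, h2⟩
  have hsm := sm_of_inter u t m h1 h2
  have hinj : Set.InjOn t (Finset.range m) := by
    intro i hi j hj hij
    simp only [Finset.coe_range, Set.mem_Iio] at hi hj
    rcases lt_trichotomy i j with h | h | h
    · exact absurd hij (hsm i j h hj).ne
    · exact h
    · exact absurd hij (hsm j i h hi).ne'
  have hdvd : (∏ i ∈ Finset.range m, (X - C (t i))) ∣ Q := by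
    apply Finset.prod_dvd_of_coprime
    · intro i hi j hj hij
      exact isCoprime_X_sub_C_of_isUnit_sub (sub_ne_zero.2 fun h => hij (hinj hi hj h)).isUnit
    · intro i hi
      exact dvd_iff_isRoot.2 (ht i (Finset.mem_range.1 hi)).1
  have hm : (∏ i ∈ Finset.range m, (X - C (t i))).Monic :=
    monic_prod_of_monic _ _ fun i _ => monic_X_sub_C _
  exact (eq_of_monic_of_dvd_of_natDegree_le hm hQ hdvd (by
    rw [hd, natDegree_prod_of_monic _ _ fun i _ => monic_X_sub_C _]; simp))

lemma ends (Q : Polynomial ℝ) (m : ℕ) (hQ : Q.Monic) (hd : Q.natDegree = m) (hm : 0 < m) (B : ℝ) :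
    (∃ x, B < x ∧ 0 < Q.eval x) ∧ (∃ x, x < B ∧ 0 < (-1 : ℝ) ^ m * Q.eval x) := by
  have key : ∀ (Q : Polynomial ℝ), Q.Monic → Q.natDegree = m → ∀ B, ∃ x, B < x ∧ 0 < Q.eval x := by
    intro Q hQ hd B
    have := Q.tendsto_atTop_of_leadingCoeff_nonneg
      (natDegree_pos_iff_degree_pos.1 (hd ▸ hm)) (by rw [hQ.leadingCoeff]; norm_num)
    exact ((Filter.eventually_gt_atTop B).and (this.eventually_gt_atTop 0)).exists
  refine ⟨key Q hQ hd B, ?_⟩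
  have hmon : (C ((-1 : ℝ) ^ m) * Q.comp (-X)).Monic := by
    have := hQ.neg_one_pow_natDegree_mul_comp_neg_X
    rw [hd] at this
    simpa using this
  have hdeg : (C ((-1 : ℝ) ^ m) * Q.comp (-X)).natDegree = m := by
    rw [natDegree_C_mul (by simp), natDegree_comp]; simp [hd]
  obtain ⟨x, hx, h⟩ := key _ hmon hdeg (-B)
  exact ⟨-x, by linarith, by simpa using h⟩

lemma inter (n : ℕ) (b c : ℕ → ℝ) (hc : ∀ k, k < n → 0 < c k) (P : ℕ → Polynomial ℝ)
    (hP0 : P 0 = 1) (hP1 : P 1 = X - C (b 0))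
    (hP : ∀ k, k < n → P (k + 2) = (X - C (b (k + 1))) * P (k + 1) - C (c k) * P k) :
    ∀ k, k ≤ n → ∃ r s : ℕ → ℝ, P k = ∏ i ∈ Finset.range k, (X - C (r i)) ∧
      P (k + 1) = ∏ i ∈ Finset.range (k + 1), (X - C (s i)) ∧
      (∀ i, i < k → s i < r i) ∧ (∀ i, i < k → r i < s (i + 1)) := by
  intro k
  induction k with
  | zero => intro _; exact ⟨fun _ => 0, fun _ => b 0, by simp [hP0], by simp [hP1], by simp, by simp⟩
  | succ k ih =>
    intro hk
    obtain ⟨r, s, hr, hs, h1, h2⟩ := ih (by omega)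
    have hrec := hP k (by omega)
    have hcm : ∀ (f : ℕ → ℝ) m, (∏ i ∈ Finset.range m, (X - C (f i))).Monic := fun f m =>
      monic_prod_of_monic _ _ fun i _ => monic_X_sub_C _
    have hcd : ∀ (f : ℕ → ℝ) m, (∏ i ∈ Finset.range m, (X - C (f i))).natDegree = m := fun f m => by
      rw [natDegree_prod_of_monic _ _ fun i _ => monic_X_sub_C _]; simp
    have hM1 : ((X - C (b (k + 1))) * P (k + 1)).Monic := by
      rw [hs]; exact (monic_X_sub_C _).mul (hcm _ _)
    have hD1 : ((X - C (b (k + 1))) * P (k + 1)).natDegree = k + 2 := by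
      rw [(monic_X_sub_C _).natDegree_mul (by rw [hs]; exact hcm _ _), hs, hcd, natDegree_X_sub_C]
      ring
    have hlt : (C (c k) * P k).degree < ((X - C (b (k + 1))) * P (k + 1)).degree := by
      rw [degree_eq_natDegree hM1.ne_zero, hD1]
      refine lt_of_le_of_lt degree_le_natDegree ?_
      have : (C (c k) * P k).natDegree ≤ k := by
        refine (natDegree_C_mul_le _ _).trans ?_
        rw [hr, hcd]
      exact_mod_cast (by omega : (C (c k) * P k).natDegree < k + 2)
    have hM : (P (k + 2)).Monic := by rw [hrec]; exact hM1.sub_of_left hlt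
    have hD : (P (k + 2)).natDegree = k + 2 := by
      rw [hrec, natDegree_sub_eq_left_of_natDegree_lt, hD1]
      rw [hD1]
      have : (C (c k) * P k).natDegree ≤ k := by
        refine (natDegree_C_mul_le _ _).trans ?_
        rw [hr, hcd]
      omega
    have hsm : ∀ i j, i < j → j < k + 1 → s i < s j := by
      intro i j hij
      induction j, hij using Nat.le_induction with
      | base => intro hj; exact (h1 i (by omega)).trans (h2 i (by omega))
      | succ j hj ih2 =>
        intro hj'
        exact (ih2 (by omega)).trans ((h1 j (by omega)).trans (h2 j (by omega)))
    obtain ⟨hi, hhi, hhi'⟩ := (ends _ _ hM hD (by omega) (s k)).1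
    obtain ⟨lo, hlo, hlo'⟩ := (ends _ _ hM hD (by omega) (s 0)).2
    have hsg : ∀ i, i ≤ k → 0 < (-1 : ℝ) ^ (k + 1 - i) * (P (k + 2)).eval (s i) := by
      intro i hik
      have hz : (P (k + 1)).eval (s i) = 0 := by
        rw [hs, eval_prod]
        exact Finset.prod_eq_zero (Finset.mem_range.2 (by omega : i < k + 1)) (by simp)
      have hsp := sgn_prod r (s i) i k hik
        (fun j hj => by
          rcases Nat.lt_or_ge (j+1) i with h | h
          · exact (h2 j (by omega)).trans (hsm _ _ h (by omega))
          · obtain rfl : i = j + 1 := by omega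
            exact h2 j (by omega))
        (fun j hj hjk => by
          rcases Nat.lt_or_ge i j with h | h
          · exact (hsm _ _ h (by omega)).trans (h1 j hjk)
          · obtain rfl : i = j := by omega
            exact h1 i hjk)
      have hev : (P k).eval (s i) = ∏ j ∈ Finset.range k, (s i - r j) := by
        rw [hr, eval_prod]; simp
      rw [hrec, eval_sub, eval_mul, hz, eval_mul, eval_C, hev, Nat.succ_sub hik, pow_succ]
      have := mul_pos (hc k (by omega)) hsp
      nlinarith
    let u : ℕ → ℝ := fun i => if i = 0 then lo else if i = k + 2 then hi else s (i - 1)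
    have u0 : u 0 = lo := by simp [u]
    have u2 : u (k + 2) = hi := by simp [u]
    have us : ∀ i, i ≤ k → u (i + 1) = s i := by
      intro i hi
      have : i ≠ k + 1 := by omega
      simp [u, this]
    obtain ⟨t, ht, ht1, ht2⟩ := core (P (k + 2)) (k + 2) hM hD u
      (by
        intro i hik
        rcases Nat.eq_zero_or_pos i with rfl | h0
        · rw [u0, us 0 (by omega)]; exact hlo
        · obtain ⟨i, rfl⟩ : ∃ j, i = j + 1 := ⟨i - 1, by omega⟩
          rw [us i (by omega)]
          rcases Nat.lt_or_ge i k with h | h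
          · rw [us (i+1) (by omega)]; exact hsm _ _ (by omega) (by omega)
          · obtain rfl : i = k := by omega
            rw [u2]; exact hhi)
      (by
        intro i hik
        rcases Nat.eq_zero_or_pos i with rfl | h0
        · rw [u0]; exact hlo'
        · obtain ⟨i, rfl⟩ : ∃ j, i = j + 1 := ⟨i - 1, by omega⟩
          rcases Nat.lt_or_ge k i with h | h
          · obtain rfl : i = k + 1 := by omega
            rw [u2]; simpa using hhi'
          · rw [us i h]
            have := hsg i h
            rwa [show k + 2 - (i + 1) = k + 1 - i by omega])
    refine ⟨s, t, hs, ht, ?_, ?_⟩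
    · intro i hi
      rw [← us i (by omega)]; exact ht2 i (by omega)
    · intro i hi
      rw [← us i (by omega)]; exact ht1 (i+1) (by omega)

lemma mirror (n : ℕ) (hn : 1 ≤ n) (x : ℝ) (b c p : ℕ → ℝ) (h0 : p 0 = 1) (h1 : p 1 = x - b 0)
    (hb : ∀ j, j ≤ n → b j = b (n - j)) (hc : ∀ k, k < n → c k = c (n - 1 - k))
    (hp : ∀ k, k < n → p (k + 2) = (x - b (k + 1)) * p (k + 1) - c k * p k)
    (hz : p (n + 1) = 0) :
    ∀ k, k < n → p (n - k) * ∏ j ∈ Finset.range k, c j = p n * p k ∧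
      p (n - (k + 1)) * ∏ j ∈ Finset.range (k + 1), c j = p n * p (k + 1) := by
  intro k
  induction k with
  | zero =>
    intro _
    refine ⟨by simp [h0], ?_⟩
    obtain ⟨m, rfl⟩ : ∃ m, n = m + 1 := ⟨n - 1, by omega⟩
    have e := hp m (by omega)
    rw [hz] at e
    have e1 := hb 0 (by omega)
    have e2 := hc 0 (by omega)
    simp only [Nat.sub_zero, Nat.add_sub_cancel] at e1 e2
    simp [h1, e1, e2]
    linarith
  | succ k ih =>
    intro hk
    obtain ⟨i1, i2⟩ := ih (by omega)
    refine ⟨i2, ?_⟩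
    obtain ⟨m, rfl⟩ : ∃ m, n = k + 2 + m := ⟨n - (k + 2), by omega⟩
    have e := hp m (by omega)
    have e' := hp k (by omega)
    have e1 := hb (k + 1) (by omega)
    have e2 := hc (k + 1) (by omega)
    rw [show k + 2 + m - (k + 1) = m + 1 by omega] at e1 i2
    rw [show k + 2 + m - 1 - (k + 1) = m by omega] at e2
    rw [show k + 2 + m - k = m + 2 by omega] at i1
    rw [show k + 2 + m - (k + 1 + 1) = m by omega]
    rw [show k + 1 + 1 = k + 2 by ring, e', Finset.prod_range_succ, Finset.prod_range_succ, e2, e1]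
    rw [Finset.prod_range_succ] at i2
    rw [e] at i1
    linear_combination - c k * i1 + (x - b (m + 1)) * i2

/-- For every `y ∈ (0, 2)`, the equation `R(x) = y` (where
`R = 1 − (∏ a(i))⁻¹ · P_{n0}` is the spectral decimation function) has exactly `n0`
distinct real solutions. -/
theorem statement_11 (n0 : ℕ) (hn0 : 2 ≤ n0) (a b : ℕ → ℝ)
    (ha : ∀ i, 1 ≤ i → i ≤ n0 → a i ≠ 0)
    (hb : ∀ j, j ≤ n0 → b j = b (n0 - j))
    (hpos : ∀ j, 1 ≤ j → j ≤ n0 → 0 < a j * a (n0 + 1 - j))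
    (P : ℕ → Polynomial ℝ)
    (hP0 : P 0 = 1) (hP1 : P 1 = X - C (b 0))
    (hP : ∀ k, 2 ≤ k → k ≤ n0 + 1 →
      P k = (X - C (b (k - 1))) * P (k - 1) - C (a (k - 1) * a (n0 + 2 - k)) * P (k - 2))
 :
    ∀ y : ℝ, 0 < y → y < 2 →
      Set.ncard {x : ℝ |
        (1 - C (∏ i ∈ Finset.Icc 1 n0, a i)⁻¹ * P n0).eval x = y} = n0 := by
  intro y hy0 hy2
  set A := ∏ i ∈ Finset.Icc 1 n0, a i with hA
  have hA0 : A ≠ 0 := Finset.prod_ne_zero_iff.2 fun i hi => by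
    rw [Finset.mem_Icc] at hi; exact ha i hi.1 hi.2
  let c : ℕ → ℝ := fun k => a (k + 1) * a (n0 - k)
  have hcpos : ∀ k, k < n0 → 0 < c k := by
    intro k hk
    have := hpos (k + 1) (by omega) (by omega)
    rwa [show n0 + 1 - (k + 1) = n0 - k by omega] at this
  have hrec : ∀ k, k < n0 → P (k + 2) = (X - C (b (k + 1))) * P (k + 1) - C (c k) * P k := by
    intro k hk
    have := hP (k + 2) (by omega) (by omega)
    rwa [show n0 + 2 - (k + 2) = n0 - k by omega] at this
  have hcsym : ∀ k, k < n0 → c k = c (n0 - 1 - k) := by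
    intro k hk
    simp only [c]
    rw [show n0 - 1 - k + 1 = n0 - k by omega, show n0 - (n0 - 1 - k) = k + 1 by omega, mul_comm]
  have hA' : A = ∏ j ∈ Finset.range n0, a (j + 1) := by
    rw [hA, Finset.range_eq_Ico, Finset.prod_Ico_add' a 0 n0 1]
    rfl
  have hcA : ∏ j ∈ Finset.range n0, c j = A ^ 2 := by
    simp only [c]
    rw [Finset.prod_mul_distrib, sq, ← hA']
    congr 1
    rw [hA', ← Finset.prod_range_reflect]
    refine Finset.prod_congr rfl fun j hj => ?_
    rw [Finset.mem_range] at hj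
    congr 1; omega
  obtain ⟨r, s, hr, hs, h1, h2⟩ := inter n0 b c hcpos P hP0 hP1 hrec n0 le_rfl
  have hsm : ∀ i, i < n0 → s i < s (i + 1) := fun i hi => (h1 i hi).trans (h2 i hi)
  have hsq : ∀ i, i ≤ n0 → (P n0).eval (s i) ^ 2 = A ^ 2 := by
    intro i hi
    have hz : (P (n0 + 1)).eval (s i) = 0 := by
      rw [hs, eval_prod]
      exact Finset.prod_eq_zero (Finset.mem_range.2 (by omega : i < n0 + 1)) (by simp)
    have := (mirror n0 (by omega) (s i) b c (fun k => (P k).eval (s i)) (by simp [hP0])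
      (by simp [hP1]) hb hcsym (fun k hk => by simp [hrec k hk]) hz (n0 - 1) (by omega)).2
    rw [show n0 - 1 + 1 = n0 by omega, hcA] at this
    simp [hP0] at this
    rw [this]; ring
  have hsm' : ∀ i j, i < j → j ≤ n0 → s i < s j := by
    intro i j hij
    induction j, hij using Nat.le_induction with
    | base => intro hj; exact hsm i (by omega)
    | succ j hj ih2 => intro hj'; exact (ih2 (by omega)).trans (hsm j (by omega))
  have hsg : ∀ i, i ≤ n0 → 0 < (-1 : ℝ) ^ (n0 - i) * (P n0).eval (s i) := by
    intro i hik
    have hsp := sgn_prod r (s i) i n0 hik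
      (fun j hj => by
        rcases Nat.lt_or_ge (j+1) i with h | h
        · exact (h2 j (by omega)).trans (hsm' _ _ h (by omega))
        · obtain rfl : i = j + 1 := by omega
          exact h2 j (by omega))
      (fun j hj hjk => by
        rcases Nat.lt_or_ge i j with h | h
        · exact (hsm' _ _ h (by omega)).trans (h1 j hjk)
        · obtain rfl : i = j := by omega
          exact h1 i hjk)
    have hev : (P n0).eval (s i) = ∏ j ∈ Finset.range n0, (s i - r j) := by
      rw [hr, eval_prod]; simp
    rwa [hev]
  have hMn : (P n0).Monic := by
    rw [hr]; exact monic_prod_of_monic _ _ fun i _ => monic_X_sub_C _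
  have hDn : (P n0).natDegree = n0 := by
    rw [hr, natDegree_prod_of_monic _ _ fun i _ => monic_X_sub_C _]; simp
  have hlt : (C ((1 - y) * A)).degree < (P n0).degree := by
    rw [degree_eq_natDegree hMn.ne_zero, hDn]
    refine lt_of_le_of_lt degree_C_le ?_
    exact_mod_cast (by omega : 0 < n0)
  have habs : |(1 - y) * A| < |A| := by
    rw [abs_mul]
    have : |1 - y| < 1 := abs_lt.2 ⟨by linarith, by linarith⟩
    nlinarith [abs_pos.2 hA0]
  obtain ⟨t, ht, ht1, ht2⟩ := core (P n0 - C ((1 - y) * A)) n0 (hMn.sub_of_left hlt)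
    (by rw [natDegree_sub_C, hDn]) s hsm (by
      intro i hi
      have e1 := hsq i hi
      have e2 := hsg i hi
      rw [eval_sub, eval_C]
      have e3 := abs_lt.1 habs
      rw [sq_eq_sq_iff_abs_eq_abs] at e1
      rw [← e1] at e3
      rcases neg_one_pow_eq_or ℝ (n0 - i) with h | h <;> rw [h] at e2 ⊢
      · rw [abs_of_pos (by linarith)] at e3; linarith [e3.2]
      · rw [abs_of_neg (by linarith)] at e3; linarith [e3.1])
  have hset : {x : ℝ | (1 - C A⁻¹ * P n0).eval x = y} = ((Finset.range n0).image t : Finset ℝ) := by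
    ext x
    have hx : (1 - C A⁻¹ * P n0).eval x = y ↔ (P n0 - C ((1 - y) * A)).eval x = 0 := by
      simp only [eval_sub, eval_one, eval_mul, eval_C]
      constructor
      · intro h
        rw [← h]; field_simp; ring
      · intro h
        rw [sub_eq_zero.1 h]; field_simp; ring
    rw [Set.mem_setOf_eq, hx, ht, eval_prod, Finset.prod_eq_zero_iff]
    simp [sub_eq_zero, eq_comm]
  rw [hset, Set.ncard_coe_finset, Finset.card_image_of_injOn, Finset.card_range]
  have hts := sm_of_inter s t n0 ht1 ht2
  intro i hi j hj hij
  simp only [Finset.coe_range, Set.mem_Iio] at hi hj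
  rcases lt_trichotomy i j with h | h | h
  · exact absurd hij (hts i j h hj).ne
  · exact h
  · exact absurd hij (hts j i h hi).ne'
end

section
/- The monic degree-n0 polynomial P_{n0} has exactly n0 distinct real roots; its derivative P′_{n0} has exactly n0−1 distinct real roots, with exactly one critical point strictly between each pair of consecutive roots of P_{n0}; and every real critical point z_c of P_{n0} (i.e. P′_{n0}(z_c) = 0) satisfies P_{n0}(z_c)·P″_{n0}(z_c) < 0. -/
open Polynomial

lemma aux_roots_count (f : ℝ[X]) (n : ℕ) (hf0 : f ≠ 0) (hc : f.roots.card = n)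
    (hs : ∀ x, f.eval x = 0 → (derivative f).eval x ≠ 0) :
    Set.ncard {x : ℝ | f.eval x = 0} = n := by
  classical
  have hnd : f.roots.Nodup := by
    rw [Multiset.nodup_iff_count_le_one]
    intro x
    rw [count_roots]
    by_contra h
    push Not at h
    rw [one_lt_rootMultiplicity_iff_isRoot hf0] at h
    exact hs x h.1 h.2
  have : {x : ℝ | f.eval x = 0} = (f.roots.toFinset : Set ℝ) := by
    ext x; simp [hf0]
  rw [this, Set.ncard_coe_finset, Multiset.toFinset_card_of_nodup hnd, hc]

lemma aux_laguerre (s : Multiset ℝ) (x : ℝ) (f : ℝ[X])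
    (hf : f = (s.map fun r => X - C r).prod) :
    0 ≤ (derivative f).eval x ^ 2 - f.eval x * (derivative (derivative f)).eval x ∧
    (0 < s.card → f.eval x ≠ 0 →
      0 < (derivative f).eval x ^ 2 - f.eval x * (derivative (derivative f)).eval x) := by
  induction s using Multiset.induction_on generalizing f with
  | empty => subst hf; simp
  | cons r s ih =>
    have ih := (ih _ rfl).1
    rw [Multiset.map_cons, Multiset.prod_cons] at hf
    generalize (s.map fun r => X - C r).prod = g at ih hf
    have key : (derivative f).eval x ^ 2 - f.eval x * (derivative (derivative f)).eval x
        = g.eval x ^ 2 + (x - r) ^ 2 *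
          ((derivative g).eval x ^ 2 - g.eval x * (derivative (derivative g)).eval x) := by
      subst hf; simp; ring
    rw [key]
    refine ⟨by positivity, fun _ h => ?_⟩
    have : g.eval x ≠ 0 := by
      rintro h0; apply h; subst hf; simp [h0]
    positivity

/-- The monic degree-`n0` polynomial `P_{n0}` has exactly `n0`
distinct real roots; its derivative has exactly `n0 − 1` distinct real roots, with
exactly one critical point strictly between each pair of consecutive roots of `P_{n0}`;
and every real critical point `z_c` of `P_{n0}` satisfies `P_{n0}(z_c)·P″_{n0}(z_c) < 0`. -/
theorem statement_12 (n0 : ℕ) (hn0 : 2 ≤ n0) (a b : ℕ → ℝ)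
    (ha : ∀ i, 1 ≤ i → i ≤ n0 → a i ≠ 0)
    (hb : ∀ j, j ≤ n0 → b j = b (n0 - j))
    (hpos : ∀ j, 1 ≤ j → j ≤ n0 → 0 < a j * a (n0 + 1 - j))
    (P : ℕ → Polynomial ℝ)
    (hP0 : P 0 = 1) (hP1 : P 1 = X - C (b 0))
    (hP : ∀ k, 2 ≤ k → k ≤ n0 + 1 →
      P k = (X - C (b (k - 1))) * P (k - 1) - C (a (k - 1) * a (n0 + 2 - k)) * P (k - 2))
 :
    Set.ncard {x : ℝ | (P n0).eval x = 0} = n0 ∧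
    Set.ncard {x : ℝ | (Polynomial.derivative (P n0)).eval x = 0} = n0 - 1 ∧
    (∀ r₁ r₂ : ℝ, (P n0).eval r₁ = 0 → (P n0).eval r₂ = 0 → r₁ < r₂ →
      (∀ x : ℝ, r₁ < x → x < r₂ → (P n0).eval x ≠ 0) →
      ∃! c : ℝ, r₁ < c ∧ c < r₂ ∧ (Polynomial.derivative (P n0)).eval c = 0) ∧
    (∀ zc : ℝ, (Polynomial.derivative (P n0)).eval zc = 0 →
      (P n0).eval zc * (Polynomial.derivative (Polynomial.derivative (P n0))).eval zc < 0) := by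
  have hrec : ∀ k, k + 2 ≤ n0 + 1 → ∃ β c : ℝ, 0 < c ∧
      P (k + 2) = (X - C β) * P (k + 1) - C c * P k := by
    intro k hk
    refine ⟨b (k + 1), a (k + 1) * a (n0 + 1 - (k + 1)), hpos _ (by omega) (by omega), ?_⟩
    have h := hP (k + 2) (by omega) hk
    have e1 : k + 2 - 1 = k + 1 := by omega
    have e2 : k + 2 - 2 = k := by omega
    have e3 : n0 + 2 - (k + 2) = n0 + 1 - (k + 1) := by omega
    rw [e1, e2, e3] at h
    exact h
  -- monic of the right degree
  have hdeg : ∀ k, k + 1 ≤ n0 + 1 → ((P k).Monic ∧ (P k).natDegree = k) ∧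
      ((P (k + 1)).Monic ∧ (P (k + 1)).natDegree = k + 1) := by
    intro k
    induction k with
    | zero => intro _; rw [hP0, zero_add, hP1]; simp [monic_X_sub_C]
    | succ k ih =>
      intro hk
      obtain ⟨⟨m0, d0⟩, m1, d1⟩ := ih (by omega)
      obtain ⟨β, c, hc, h⟩ := hrec k (by omega)
      refine ⟨⟨m1, d1⟩, ?_⟩
      have mm : ((X - C β) * P (k + 1)).Monic := (monic_X_sub_C β).mul m1
      have dd : ((X - C β) * P (k + 1)).natDegree = k + 2 := by
        rw [(monic_X_sub_C β).natDegree_mul m1, natDegree_X_sub_C, d1]; omega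
      have hlt : (C c * P k).natDegree < ((X - C β) * P (k + 1)).natDegree := by
        rw [dd]; exact lt_of_le_of_lt (natDegree_C_mul_le _ _) (by omega)
      rw [show k + 1 + 1 = k + 2 from rfl, h]
      refine ⟨mm.sub_of_left (degree_lt_degree hlt), ?_⟩
      rw [natDegree_sub_eq_left_of_natDegree_lt hlt, dd]
  -- Wronskian
  have hW : ∀ k, k + 1 ≤ n0 + 1 → ∀ x : ℝ, 0 < (derivative (P (k + 1))).eval x * (P k).eval x
      - (P (k + 1)).eval x * (derivative (P k)).eval x := by
    intro k
    induction k with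
    | zero => intro _ x; rw [hP0, zero_add, hP1]; simp
    | succ k ih =>
      intro hk x
      obtain ⟨β, c, hc, h⟩ := hrec k (by omega)
      have ih := ih (by omega) x
      have key : (derivative (P (k + 2))).eval x * (P (k + 1)).eval x
          - (P (k + 2)).eval x * (derivative (P (k + 1))).eval x
          = (P (k + 1)).eval x ^ 2 + c * ((derivative (P (k + 1))).eval x * (P k).eval x
          - (P (k + 1)).eval x * (derivative (P k)).eval x) := by
        rw [h]; simp; ring
      rw [show k + 1 + 1 = k + 2 from rfl, key]
      positivity
  -- upper half plane
  have hIm : ∀ k, k + 1 ≤ n0 + 1 → ∀ z : ℂ, z.im ≠ 0 →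
      0 < z.im * (aeval z (P (k + 1)) * (starRingEnd ℂ) (aeval z (P k))).im := by
    intro k
    induction k with
    | zero =>
      intro _ z hz
      rw [hP0, zero_add, hP1]
      simp
      exact hz
    | succ k ih =>
      intro hk z hz
      obtain ⟨β, c, hc, h⟩ := hrec k (by omega)
      have ih := ih (by omega) z hz
      have hne : aeval z (P (k + 1)) ≠ 0 := by
        intro h0; rw [h0] at ih; simp at ih
      have hns := Complex.normSq_pos.2 hne
      rw [show k + 1 + 1 = k + 2 from rfl, h]
      rw [Complex.normSq_apply] at hns
      simp only [map_sub, map_mul, aeval_X, aeval_C]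
      generalize aeval z (P (k + 1)) = u at *
      generalize aeval z (P k) = v at *
      have key : z.im * (((z - (algebraMap ℝ ℂ) β) * u - (algebraMap ℝ ℂ) c * v) *
          (starRingEnd ℂ) u).im = z.im ^ 2 * (u.re * u.re + u.im * u.im)
          + c * (z.im * (u * (starRingEnd ℂ) v).im) := by
        simp; ring
      rw [key]
      positivity
  obtain ⟨m, rfl⟩ : ∃ m, n0 = m + 1 := ⟨n0 - 1, by omega⟩
  obtain ⟨-, hmon, hnd⟩ := hdeg m (by omega)
  have hW := hW m (by omega)
  have hIm := hIm m (by omega)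
  generalize P m = Q at *
  generalize P (m + 1) = f at *
  clear hrec hdeg hP hP0 hP1
  have hf0 : f ≠ 0 := hmon.ne_zero
  have hsplit : f.Splits := by
    refine Splits.of_splits_map (algebraMap ℝ ℂ) (IsAlgClosed.splits _) ?_
    intro z hz
    have hz' : aeval z f = 0 := by
      have := (mem_roots'.1 hz).2
      rwa [IsRoot, eval_map_algebraMap] at this
    by_cases hzi : z.im = 0
    · exact ⟨z.re, by apply Complex.ext <;> simp [hzi]⟩
    · have := hIm z hzi
      rw [hz'] at this
      simp at this
  have hcard : f.roots.card = m + 1 := by rw [← hnd]; exact hsplit.natDegree_eq_card_roots.symm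
  have hsimple : ∀ x, f.eval x = 0 → (derivative f).eval x ≠ 0 := by
    intro x hx h
    have := hW x
    rw [hx, h] at this
    simp at this
  have hL : ∀ x, f.eval x ≠ 0 →
      0 < (derivative f).eval x ^ 2 - f.eval x * (derivative (derivative f)).eval x := by
    intro x hx
    exact (aux_laguerre f.roots x f (hsplit.eq_prod_roots_of_monic hmon)).2 (by omega) hx
  have hcrit : ∀ zc : ℝ, (derivative f).eval zc = 0 →
      f.eval zc * (derivative (derivative f)).eval zc < 0 := by
    intro z hz
    have := hL z (fun h => hsimple z h hz)
    rw [hz] at this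
    linarith
  refine ⟨aux_roots_count f _ hf0 hcard hsimple, ?_, ?_, hcrit⟩
  · have hd0 : derivative f ≠ 0 := by
      intro h
      have := natDegree_eq_zero_of_derivative_eq_zero h
      omega
    have h1 := card_roots_le_derivative f
    have h2 := card_roots' (derivative f)
    have h3 := natDegree_derivative_le f
    refine aux_roots_count _ _ hd0 (by omega) ?_
    intro x hx h
    have := hcrit x hx
    rw [h] at this
    simp at this
  · intro r₁ r₂ h1 h2 hlt hne
    obtain ⟨c, hc, hc0⟩ := exists_hasDerivAt_eq_zero hlt f.continuous.continuousOn
      (h1.trans h2.symm) (fun x _ => f.hasDerivAt x)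
    have hanti : StrictAntiOn (fun x => (derivative f).eval x / f.eval x) (Set.Ioo r₁ r₂) := by
      refine strictAntiOn_of_deriv_neg (convex_Ioo _ _) ?_ ?_
      · exact (derivative f).continuous.continuousOn.div f.continuous.continuousOn
          (fun x hx => hne x hx.1 hx.2)
      · intro x hx
        rw [interior_Ioo] at hx
        have hx0 := hne x hx.1 hx.2
        have hd := ((derivative f).hasDerivAt x).div (f.hasDerivAt x) hx0
        have := hd.deriv
        change deriv (fun x => (derivative f).eval x / f.eval x) x = _ at this
        rw [this]
        apply div_neg_of_neg_of_pos
        · nlinarith [hL x hx0]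
        · positivity
    refine ⟨c, ⟨hc.1, hc.2, hc0⟩, ?_⟩
    rintro y ⟨hy1, hy2, hy0⟩
    refine hanti.injOn ⟨hy1, hy2⟩ hc ?_
    simp [hy0, hc0]
end

section
/- The spectrum of the piecewise centrosymmetric Jacobi matrix J (as a complex matrix) equals { z ∈ ℂ : R(z) ∈ σ(Δ_p) and R(z) ∉ {0,2} } ∪ σ(J_cs), where σ denotes the spectrum over ℂ. -/
open Polynomial

/-- The `(k0+1) × (k0+1)` probabilistic path Laplacian `Δ_p` with transition
probabilities `p k`: diagonal entries `1`, superdiagonal `Δ_p(k, k+1) = −p k`, and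
subdiagonal `Δ_p(k, k−1) = −(1 − p k)`. -/
noncomputable def DeltaP (k0 : ℕ) (p : ℕ → ℝ) :
    Matrix (Fin (k0 + 1)) (Fin (k0 + 1)) ℝ :=
  Matrix.of fun i j =>
    if (j : ℕ) = (i : ℕ) then 1
    else if (j : ℕ) = (i : ℕ) + 1 then -p (i : ℕ)
    else if (i : ℕ) = (j : ℕ) + 1 then -(1 - p (i : ℕ))
    else 0

/-- The `(k0·n0+1) × (k0·n0+1)` piecewise centrosymmetric Jacobi matrix obtained by
substituting copies of `J_cs` between consecutive vertices of a path of length `k0`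
with transition probabilities `p k`:  `J(x,x) = b (x % n0)`; if `x` is not a multiple
of `n0` then `J(x, x+1) = a (x % n0 + 1)` and `J(x, x−1) = a (n0 + 1 − x % n0)`; if
`x = k·n0` then `J(x, x+1) = p k · a 1` and `J(x, x−1) = (1 − p k) · a 1`. -/
noncomputable def Jsub (n0 k0 : ℕ) (a b p : ℕ → ℝ) :
    Matrix (Fin (k0 * n0 + 1)) (Fin (k0 * n0 + 1)) ℝ :=
  Matrix.of fun x y =>
    if (y : ℕ) = (x : ℕ) then b ((x : ℕ) % n0)
    else if (y : ℕ) = (x : ℕ) + 1 then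
      (if (x : ℕ) % n0 = 0 then p ((x : ℕ) / n0) * a 1 else a ((x : ℕ) % n0 + 1))
    else if (x : ℕ) = (y : ℕ) + 1 then
      (if (x : ℕ) % n0 = 0 then (1 - p ((x : ℕ) / n0)) * a 1 else a (n0 + 1 - (x : ℕ) % n0))
    else 0

theorem tri_row (N : ℕ) (T : Matrix (Fin (N+1)) (Fin (N+1)) ℂ) (l d u : ℕ → ℂ)
    (hT : ∀ x y : Fin (N+1), T x y = if (y:ℕ) = x then d x else if (y:ℕ) = x + 1 then u x
      else if (x:ℕ) = y + 1 then l x else 0)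
    (hl : l 0 = 0) (hu : u N = 0) (g : ℕ → ℂ) (x : Fin (N+1)) :
    (T.mulVec (fun y => g y)) x = l x * g (x - 1) + d x * g x + u x * g (x + 1) := by
  obtain ⟨x, hx⟩ := x
  have h1 : (T.mulVec (fun y => g y)) ⟨x, hx⟩ = ∑ y ∈ Finset.range (N+1),
      ((if y + 1 = x then l x * g y else 0) + (if y = x then d x * g y else 0)
        + (if y = x + 1 then u x * g y else 0)) := by
    rw [← Fin.sum_univ_eq_sum_range (fun y => ((if y + 1 = x then l x * g y else 0)
      + (if y = x then d x * g y else 0) + (if y = x + 1 then u x * g y else 0)))]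
    simp only [Matrix.mulVec, dotProduct]
    refine Finset.sum_congr rfl fun y _ => ?_
    rw [hT]
    simp only []
    split_ifs <;> first | omega | simp
  rw [h1, Finset.sum_add_distrib, Finset.sum_add_distrib]
  have e1 : ∑ y ∈ Finset.range (N+1), (if y + 1 = x then l x * g y else 0) = l x * g (x-1) := by
    cases x with
    | zero => simp [hl]
    | succ x =>
      simp only [Nat.add_right_cancel_iff, Finset.sum_ite_eq', Finset.mem_range]
      rw [if_pos (by omega)]; simp
  have e2 : ∑ y ∈ Finset.range (N+1), (if y = x then d x * g y else 0) = d x * g x := by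
    simp only [Finset.sum_ite_eq', Finset.mem_range]
    rw [if_pos (by omega)]
  have e3 : ∑ y ∈ Finset.range (N+1), (if y = x+1 then u x * g y else 0) = u x * g (x+1) := by
    simp only [Finset.sum_ite_eq', Finset.mem_range]
    split_ifs with h
    · rfl
    · have : x = N := by omega
      simp [this, hu]
  rw [e1, e2, e3]

theorem tri_spec (N : ℕ) (T : Matrix (Fin (N+1)) (Fin (N+1)) ℂ) (l d u : ℕ → ℂ)
    (hT : ∀ x y : Fin (N+1), T x y = if (y:ℕ) = x then d x else if (y:ℕ) = x + 1 then u x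
      else if (x:ℕ) = y + 1 then l x else 0)
    (hl : l 0 = 0) (hu : u N = 0) (hu' : ∀ x, x < N → u x ≠ 0) (z : ℂ) (f : ℕ → ℂ) (hf0 : f 0 = 1)
    (hf : ∀ x, x < N → l x * f (x - 1) + d x * f x + u x * f (x + 1) = z * f x) :
    z ∈ spectrum ℂ T ↔ l N * f (N - 1) + d N * f N = z * f N := by
  have key : z ∈ spectrum ℂ T ↔ ∃ v : Fin (N+1) → ℂ, v ≠ 0 ∧ T.mulVec v = z • v := by
    rw [spectrum.mem_iff, Matrix.isUnit_iff_isUnit_det, isUnit_iff_ne_zero, not_not,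
      ← Matrix.exists_mulVec_eq_zero_iff]
    refine exists_congr fun v => and_congr_right fun _ => ?_
    rw [Matrix.sub_mulVec, sub_eq_zero, Algebra.algebraMap_eq_smul_one, Matrix.smul_mulVec,
      Matrix.one_mulVec]
    exact eq_comm
  rw [key]
  constructor
  · rintro ⟨v, hv, hTv⟩
    obtain ⟨g, rfl⟩ : ∃ g : ℕ → ℂ, v = fun y : Fin (N+1) => g y :=
      ⟨fun n => if h : n < N + 1 then v ⟨n, h⟩ else 0, by ext y; simp [y.isLt]⟩
    have hg : ∀ x, x < N + 1 → l x * g (x - 1) + d x * g x + u x * g (x + 1) = z * g x := by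
      intro x hx
      have := congrFun hTv ⟨x, hx⟩
      rw [tri_row N T l d u hT hl hu] at this
      simpa using this
    have hgf : ∀ x, x ≤ N → g x = g 0 * f x := by
      intro x
      induction x using Nat.strong_induction_on with
      | _ x ih =>
        intro hx
        cases x with
        | zero => simp [hf0]
        | succ x =>
          have i1 := ih x (by omega) (by omega)
          have i2 := ih (x - 1) (by omega) (by omega)
          have h1 := hg x (by omega)
          have h2 := hf x (by omega)
          rw [i1, i2] at h1
          apply mul_left_cancel₀ (hu' x (by omega))
          linear_combination h1 - g 0 * h2
    have hg0 : g 0 ≠ 0 := by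
      intro h0
      apply hv
      ext y
      simp [hgf y (by omega), h0]
    have h1 := hg N (by omega)
    rw [hu, hgf N le_rfl, hgf (N-1) (by omega)] at h1
    apply mul_left_cancel₀ hg0
    linear_combination h1
  · intro h
    refine ⟨fun y => f y, ?_, ?_⟩
    · intro h0
      have := congrFun h0 0
      simp [hf0] at this
    · ext x
      rw [tri_row N T l d u hT hl hu]
      simp only [Pi.smul_apply, smul_eq_mul]
      by_cases hx : (x:ℕ) < N
      · exact hf x hx
      · have : (x:ℕ) = N := by omega
        rw [this, hu]; linear_combination h

theorem rec_exists (N : ℕ) (l d u : ℕ → ℂ) (hu' : ∀ x, x < N → u x ≠ 0) (z α β : ℂ) :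
    ∃ f : ℕ → ℂ, f 0 = α ∧ f 1 = β ∧
      ∀ x, 1 ≤ x → x < N → l x * f (x - 1) + d x * f x + u x * f (x + 1) = z * f x := by
  let F : ℕ → ℂ × ℂ := fun n => Nat.rec (α, β)
    (fun n q => (q.2, ((z - d (n+1)) * q.2 - l (n+1) * q.1) / u (n+1))) n
  refine ⟨fun n => (F n).1, rfl, rfl, ?_⟩
  intro x h1 h2
  obtain ⟨x, rfl⟩ : ∃ y, x = y + 1 := ⟨x - 1, by omega⟩
  have e : (F (x+1+1)).1 = ((z - d (x+1)) * (F (x+1)).1 - l (x+1) * (F x).1) / u (x+1) := rfl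
  simp only [Nat.add_sub_cancel]
  rw [e, mul_div_cancel₀ _ (hu' _ h2)]
  ring

/-- solutions of the interior equations -/
def Interior (n0 : ℕ) (a b : ℕ → ℂ) (z : ℂ) (g : ℕ → ℂ) : Prop :=
  ∀ j, 1 ≤ j → j < n0 → a (n0 + 1 - j) * g (j - 1) + b j * g j + a (j + 1) * g (j + 1) = z * g j

theorem Interior.refl {n0 : ℕ} {a b : ℕ → ℂ} {z : ℂ} {g : ℕ → ℂ}
    (hb : ∀ j, j ≤ n0 → b j = b (n0 - j)) (h : Interior n0 a b z g) :
    Interior n0 a b z (fun j => g (n0 - j)) := by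
  intro j h1 h2
  have := h (n0 - j) (by omega) (by omega)
  rw [show n0 + 1 - (n0 - j) = j + 1 by omega, show n0 - j - 1 = n0 - (j + 1) by omega,
    show n0 - j + 1 = n0 - (j - 1) by omega, ← hb j h2.le,
    show n0 - (j - 1) = n0 + 1 - j by omega] at this
  simp only []
  rw [show n0 - (j - 1) = n0 + 1 - j by omega]
  linear_combination this

theorem Interior.expand {n0 : ℕ} {a b : ℕ → ℂ} {z : ℂ} {g φ ψ : ℕ → ℂ} 
    (ha : ∀ i, 1 ≤ i → i ≤ n0 → a i ≠ 0)
    (hφ : Interior n0 a b z φ) (hψ : Interior n0 a b z ψ) (hφ0 : φ 0 = 1)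
    (hφ1 : a 1 * φ 1 = z - b 0) (hψ0 : ψ 0 = 0) (hψ1 : a 1 * ψ 1 = 1)
    (h : Interior n0 a b z g) (j : ℕ) (hj : j ≤ n0) :
    g j = g 0 * φ j + (a 1 * g 1 + (b 0 - z) * g 0) * ψ j := by
  induction j using Nat.strong_induction_on with
  | _ j ih =>
    match j with
    | 0 => simp [hφ0, hψ0]
    | 1 =>
      apply mul_left_cancel₀ (ha 1 le_rfl hj)
      linear_combination - g 0 * hφ1 - (a 1 * g 1 + (b 0 - z) * g 0) * hψ1
    | j + 2 =>
      have i1 := ih j (by omega) (by omega)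
      have i2 := ih (j+1) (by omega) (by omega)
      have e1 := h (j+1) (by omega) (by omega)
      have e2 := hφ (j+1) (by omega) (by omega)
      have e3 := hψ (j+1) (by omega) (by omega)
      simp only [Nat.add_sub_cancel] at e1 e2 e3
      apply mul_left_cancel₀ (ha (j+1+1) (by omega) (by omega))
      generalize a 1 * g 1 + (b 0 - z) * g 0 = w at *
      rw [i1, i2] at e1
      linear_combination e1 - g 0 * e2 - w * e3

theorem core_s14 (n0 k0 : ℕ) (hn0 : 2 ≤ n0) (hk0 : 2 ≤ k0) (c s e t z a1 b0 : ℂ) (p : ℕ → ℝ)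
    (hp0 : p 0 = 1) (hpk0 : p k0 = 0)
    (hp : ∀ k, 1 ≤ k → k < k0 → 0 < p k ∧ p k < 1)
    (ha1 : a1 ≠ 0) (h1 : c * c + e * s = 1) (h2 : e * (c + t) = 0)
    (U V D : ℕ → ℂ) (hU0 : U 0 = 1) (hV0 : V 0 = 0)
    (hU : ∀ k, k < k0 → U (k+1) = c * U k + s * V k)
    (hD : ∀ k, k < k0 → D (k+1) = e * U k + t * V k)
    (hV : ∀ k, 1 ≤ k → k < k0 → (p k : ℂ) * V k + (1 - p k) * D k = 0) :
    D k0 = 0 ↔ ((1 - c) ∈ spectrum ℂ ((DeltaP k0 p).map Complex.ofReal) ∧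
      (1 - c) ∉ ({0, 2} : Set ℂ)) ∨ e = 0 := by
  have hpne : ∀ k, 1 ≤ k → k < k0 → (p k : ℂ) ≠ 0 := fun k h h' =>
    Complex.ofReal_ne_zero.2 (hp k h h').1.ne'
  by_cases he : e = 0
  · simp only [he, or_true, iff_true]
    have hV' : ∀ k, k < k0 → V k = 0 := by
      intro k
      induction k with
      | zero => intro _; exact hV0
      | succ k ih =>
        intro hk
        have := hV (k+1) (by omega) hk
        rw [hD k (by omega), ih (by omega), he] at this
        simpa [hpne (k+1) (by omega) hk] using this
    have := hD (k0 - 1) (by omega)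
    rw [hV' (k0-1) (by omega), he, Nat.sub_add_cancel (by omega)] at this
    simpa using this
  have ht : t = -c := by
    have := (mul_eq_zero.1 h2).resolve_left he
    linear_combination this
  subst ht
  simp only [he, or_false]
  have hmem : (1 - c) ∈ ({0, 2} : Set ℂ) ↔ s = 0 := by
    simp only [Set.mem_insert_iff, Set.mem_singleton_iff]
    constructor
    · intro h
      have : e * s = 0 := by
        rcases h with h | h
        · linear_combination h1 + (c + 1) * h
        · linear_combination h1 + (c - 1) * h
      exact (mul_eq_zero.1 this).resolve_left he
    · intro h
      have : (1 - c) * (1 - c - 2) = 0 := by rw [h] at h1; linear_combination h1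
      rcases mul_eq_zero.1 this with h | h
      · exact Or.inl h
      · right; linear_combination h
  rw [hmem]
  by_cases hs : s = 0
  · simp only [hs, not_true_eq_false, and_false, iff_false]
    have hc : c * c = 1 := by rw [hs] at h1; linear_combination h1
    have hc0 : c ≠ 0 := by rintro rfl; simp at hc
    have hUV : ∀ k, k < k0 → U k = c ^ k ∧ ∃ r : ℝ, 0 ≤ r ∧ c * V k = - r * e * c ^ k := by
      intro k
      induction k with
      | zero => intro _; exact ⟨by simp [hU0], 0, le_rfl, by simp [hV0]⟩
      | succ k ih =>
        intro hk
        obtain ⟨i1, r, hr, i2⟩ := ih (by omega)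
        refine ⟨by rw [hU k (by omega), hs, i1]; ring, 
          (1 - p (k+1)) / p (k+1) * (1 + r), ?_, ?_⟩
        · have := hp (k+1) (by omega) hk
          have h3 : 0 ≤ 1 - p (k+1) := by linarith
          have h4 := this.1.le
          positivity
        · have h5 := hV (k+1) (by omega) hk
          have h6 := hpne (k+1) (by omega) hk
          rw [hD k (by omega), i1] at h5
          push_cast
          apply mul_left_cancel₀ h6
          field_simp
          linear_combination c * h5 + (1 - (p (k+1) : ℂ)) * c * i2
    obtain ⟨i1, r, hr, i2⟩ := hUV (k0 - 1) (by omega)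
    have h7 := hD (k0 - 1) (by omega)
    rw [Nat.sub_add_cancel (by omega), i1] at h7
    have h8 : D k0 = ((1 + r : ℝ) : ℂ) * (e * c ^ (k0 - 1)) := by
      push_cast
      linear_combination h7 - i2
    rw [h8]
    have h9 : ((1 + r : ℝ) : ℂ) ≠ 0 := Complex.ofReal_ne_zero.2 (by positivity)
    exact mul_ne_zero h9 (mul_ne_zero he (pow_ne_zero _ hc0))
  · simp only [hs, not_false_eq_true, and_true]
    have hsD : ∀ k, 1 ≤ k → k ≤ k0 → s * D k = U (k-1) - c * U k := by
      intro k hk hk'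
      obtain ⟨k, rfl⟩ : ∃ y, k = y + 1 := ⟨k - 1, by omega⟩
      have e1 := hU k (by omega)
      have e2 := hD k (by omega)
      simp only [Nat.add_sub_cancel]
      rw [e2]
      linear_combination U k * h1 + c * e1
    rw [tri_spec k0 _ (fun x => -(1 - p x)) (fun _ => 1) (fun x => - p x) ?_ (by simp [hp0])
      (by simp [hpk0]) ?_ (1 - c) U hU0 ?_]
    · have := hsD k0 (by omega) le_rfl
      simp only [hpk0]
      push_cast
      constructor
      · intro h
        rw [h] at this
        linear_combination this
      · intro h
        apply mul_left_cancel₀ hs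
        linear_combination this - h
    · intro x y
      simp only [DeltaP, Matrix.map_apply, Matrix.of_apply]
      split_ifs <;> simp
    · intro x hx
      rcases Nat.eq_zero_or_pos x with rfl | h
      · simp [hp0]
      · exact neg_ne_zero.2 (hpne x h hx)
    · intro k hk
      have e1 := hU k hk
      rcases Nat.eq_zero_or_pos k with rfl | h
      · simp only [hp0]
        push_cast
        rw [hV0] at e1
        linear_combination -e1
      · have e2 := hsD k h hk.le
        have e3 := hV k h hk
        linear_combination -s * e3 + (1 - (p k : ℂ)) * e2 - (p k : ℂ) * e1

/-- The spectrum over `ℂ` of the piecewise centrosymmetric Jacobi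
matrix `J` equals `{z : R(z) ∈ σ(Δ_p) and R(z) ∉ {0,2}} ∪ σ(J_cs)`, where
`R(z) = 1 − P_{n0}(z)/∏ a(i)` is the spectral decimation function. -/
theorem statement_14 (n0 : ℕ) (hn0 : 2 ≤ n0) (a b : ℕ → ℝ)
    (ha : ∀ i, 1 ≤ i → i ≤ n0 → a i ≠ 0)
    (hb : ∀ j, j ≤ n0 → b j = b (n0 - j))
    (hpos : ∀ j, 1 ≤ j → j ≤ n0 → 0 < a j * a (n0 + 1 - j))
    (P : ℕ → Polynomial ℝ)
    (hP0 : P 0 = 1) (hP1 : P 1 = X - C (b 0))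
    (hP : ∀ k, 2 ≤ k → k ≤ n0 + 1 →
      P k = (X - C (b (k - 1))) * P (k - 1) - C (a (k - 1) * a (n0 + 2 - k)) * P (k - 2))
    (k0 : ℕ) (hk0 : 2 ≤ k0) (p : ℕ → ℝ)
    (hp0 : p 0 = 1) (hpk0 : p k0 = 0)
    (hp : ∀ k, 1 ≤ k → k < k0 → 0 < p k ∧ p k < 1) :
    spectrum ℂ ((Jsub n0 k0 a b p).map Complex.ofReal) =
      {z : ℂ |
        (1 - Polynomial.aeval z (P n0) / ∏ i ∈ Finset.Icc 1 n0, (a i : ℂ)) ∈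
            spectrum ℂ ((DeltaP k0 p).map Complex.ofReal) ∧
        (1 - Polynomial.aeval z (P n0) / ∏ i ∈ Finset.Icc 1 n0, (a i : ℂ)) ∉
            ({0, 2} : Set ℂ)} ∪
      spectrum ℂ ((Jcs n0 a b).map Complex.ofReal) := by
  obtain ⟨A, hA⟩ : ∃ A : ℕ → ℂ, A = fun i => (a i : ℂ) := ⟨_, rfl⟩
  obtain ⟨B, hB⟩ : ∃ B : ℕ → ℂ, B = fun i => (b i : ℂ) := ⟨_, rfl⟩
  have hA' : ∀ i, 1 ≤ i → i ≤ n0 → A i ≠ 0 := fun i h h' => by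
    rw [hA]; exact Complex.ofReal_ne_zero.2 (ha i h h')
  have hB' : ∀ j, j ≤ n0 → B j = B (n0 - j) := fun j h => by
    rw [hB]; simp only []; rw [hb j h]
  have hA1 : A 1 ≠ 0 := hA' 1 le_rfl (by omega)
  ext z
  obtain ⟨φ, hφ0, hφ1, hφ⟩ := rec_exists n0 (fun j => A (n0 + 1 - j)) B (fun j => A (j+1))
    (fun x hx => hA' _ (by omega) (by omega)) z 1 ((z - B 0) / A 1)
  obtain ⟨ψ, hψ0, hψ1, hψ⟩ := rec_exists n0 (fun j => A (n0 + 1 - j)) B (fun j => A (j+1))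
    (fun x hx => hA' _ (by omega) (by omega)) z 0 (1 / A 1)
  replace hφ1 : A 1 * φ 1 = z - B 0 := by rw [hφ1]; field_simp
  replace hψ1 : A 1 * ψ 1 = 1 := by rw [hψ1]; field_simp
  have Iφ : Interior n0 A B z φ := hφ
  have Iψ : Interior n0 A B z ψ := hψ
  have ex := fun g (hg : Interior n0 A B z g) j hj =>
    Interior.expand (g := g) hA' Iφ Iψ hφ0 hφ1 hψ0 hψ1 hg j hj
  have hBn : B n0 = B 0 := by rw [hB' n0 le_rfl, Nat.sub_self]
  obtain ⟨e, he⟩ : ∃ e, e = A 1 * φ (n0 - 1) + (B 0 - z) * φ n0 := ⟨_, rfl⟩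
  obtain ⟨t, ht⟩ : ∃ e, e = A 1 * ψ (n0 - 1) + (B 0 - z) * ψ n0 := ⟨_, rfl⟩
  have h1 : φ n0 * φ n0 + e * ψ n0 = 1 := by
    have := ex _ (Iφ.refl hB') n0 le_rfl
    simp only [Nat.sub_self, Nat.sub_zero, hφ0, ← he] at this
    exact this.symm
  have h2 : e * (φ n0 + t) = 0 := by
    have := ex _ (Iφ.refl hB') (n0 - 1) (by omega)
    simp only [Nat.sub_zero, ← he] at this
    rw [show n0 - (n0 - 1) = 1 by omega] at this
    linear_combination e * ht + φ n0 * he - A 1 * this + hφ1 + (B 0 - z) * h1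
  have hPφ : ∀ j, j ≤ n0 → aeval z (P j) = φ j * ∏ i ∈ Finset.Icc 1 j, A i := by
    intro j
    induction j using Nat.strong_induction_on with
    | _ j ih =>
      intro hj
      match j with
      | 0 => simp [hP0, hφ0]
      | 1 =>
        simp only [hP1, map_sub, aeval_X, aeval_C, Finset.Icc_self, Finset.prod_singleton]
        rw [mul_comm, hφ1, hB]; rfl
      | j + 2 =>
        have i1 := ih j (by omega) (by omega)
        have i2 := ih (j+1) (by omega) (by omega)
        have h3 := Iφ (j+1) (by omega) (by omega)
        rw [hP (j+2) (by omega) (by omega)]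
        simp only [Nat.add_sub_cancel, show j + 2 - 1 = j + 1 by omega, map_sub, map_mul,
          aeval_X, aeval_C, i1, i2]
        simp only [Nat.add_sub_cancel] at h3
        rw [Finset.prod_Icc_succ_top (by omega : 1 ≤ j + 1 + 1),
          Finset.prod_Icc_succ_top (by omega : 1 ≤ j + 1)]
        have c1 : (algebraMap ℝ ℂ) (b (j+1)) = B (j+1) := by rw [hB]; rfl
        have c2 : (algebraMap ℝ ℂ) (a (j+1)) = A (j+1) := by rw [hA]; rfl
        have c3 : (algebraMap ℝ ℂ) (a (n0 + 2 - (j+2))) = A (n0 + 1 - (j+1)) := by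
          rw [hA, show n0 + 2 - (j+2) = n0 + 1 - (j+1) by omega]; rfl
        rw [c1, c2, c3]
        linear_combination - (∏ i ∈ Finset.Icc 1 j, A i) * A (j+1) * h3
  have hc : aeval z (P n0) / ∏ i ∈ Finset.Icc 1 n0, (a i : ℂ) = φ n0 := by
    have h3 : ∏ i ∈ Finset.Icc 1 n0, (a i : ℂ) = ∏ i ∈ Finset.Icc 1 n0, A i := by rw [hA]
    have h4 : ∏ i ∈ Finset.Icc 1 n0, A i ≠ 0 := Finset.prod_ne_zero_iff.2 fun i hi => by
      rw [Finset.mem_Icc] at hi; exact hA' i hi.1 hi.2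
    rw [h3, hPφ n0 le_rfl, mul_div_cancel_right₀ _ h4]
  have hcs : z ∈ spectrum ℂ ((Jcs n0 a b).map Complex.ofReal) ↔ e = 0 := by
    rw [tri_spec n0 _ (fun x => if x = 0 then 0 else A (n0 + 1 - x)) B
      (fun x => if x = n0 then 0 else A (x+1)) ?_ (by simp) (by simp) ?_ z φ hφ0 ?_]
    · rw [if_neg (by omega), show n0 + 1 - n0 = 1 by omega, hBn, he]
      constructor
      · intro h; linear_combination h
      · intro h; linear_combination h
    · intro x y
      simp only [Jcs, Matrix.map_apply, Matrix.of_apply, hA, hB]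
      have := x.isLt
      have := y.isLt
      split_ifs <;> first | omega | rfl | skip
      rename_i h _
      rw [h, show n0 + 1 - ((y:ℕ) + 1) = n0 - y by omega]
    · intro x hx
      rw [if_neg (by omega)]
      exact hA' _ (by omega) (by omega)
    · intro x hx
      rcases Nat.eq_zero_or_pos x with rfl | h
      · rw [if_pos rfl, if_neg (by omega), hφ0]
        linear_combination hφ1
      · rw [if_neg (by omega), if_neg (by omega)]
        exact Iφ x h hx
  obtain ⟨L, hL⟩ : ∃ L : ℕ → ℂ, L = fun x => if x % n0 = 0 then (1 - (p (x / n0) : ℂ)) * A 1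
    else A (n0 + 1 - x % n0) := ⟨_, rfl⟩
  obtain ⟨S, hS⟩ : ∃ S : ℕ → ℂ, S = fun x => if x % n0 = 0 then (p (x / n0) : ℂ) * A 1
    else A (x % n0 + 1) := ⟨_, rfl⟩
  have hnpos : 0 < n0 := by omega
  have hSne : ∀ x, x < k0 * n0 → S x ≠ 0 := by
    intro x hx
    rw [hS]
    simp only []
    split_ifs with h
    · refine mul_ne_zero (Complex.ofReal_ne_zero.2 ?_) hA1
      have h3 : x / n0 < k0 := (Nat.div_lt_iff_lt_mul hnpos).2 hx
      rcases Nat.eq_zero_or_pos (x / n0) with h4 | h4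
      · rw [h4, hp0]; exact one_ne_zero
      · exact (hp _ h4 h3).1.ne'
    · have := Nat.mod_lt x hnpos
      exact hA' _ (by omega) (by omega)
  have hLk : ∀ k, L (k * n0) = (1 - (p k : ℂ)) * A 1 := by
    intro k; rw [hL]; simp [Nat.mul_div_cancel _ hnpos]
  have hSk : ∀ k, S (k * n0) = (p k : ℂ) * A 1 := by
    intro k; rw [hS]; simp [Nat.mul_div_cancel _ hnpos]
  have hL0 : L 0 = 0 := by simpa [hp0] using hLk 0
  have hS0 : S 0 = A 1 := by simpa [hp0] using hSk 0
  obtain ⟨f, hf0, hf1, hf⟩ := rec_exists (k0 * n0) L (fun x => B (x % n0)) S hSne z 1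
    ((z - B 0) / A 1)
  replace hf1 : A 1 * f 1 = z - B 0 := by rw [hf1]; field_simp
  have hNpos : n0 ≤ k0 * n0 := Nat.le_mul_of_pos_left _ (by omega)
  have hJ : z ∈ spectrum ℂ ((Jsub n0 k0 a b p).map Complex.ofReal) ↔
      A 1 * f (k0 * n0 - 1) + (B 0 - z) * f (k0 * n0) = 0 := by
    rw [tri_spec (k0 * n0) _ L (fun x => B (x % n0)) S ?_ hL0 (by simp [hSk, hpk0]) hSne z f hf0 ?_]
    · rw [hLk, hpk0, Nat.mul_mod_left]
      push_cast
      constructor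
      · intro h; linear_combination h
      · intro h; linear_combination h
    · intro x y
      simp only [Jsub, Matrix.map_apply, Matrix.of_apply, hA, hB, hL, hS]
      split_ifs <;> simp
    · intro x hx
      rcases Nat.eq_zero_or_pos x with rfl | h
      · rw [hL0, hS0, Nat.zero_mod, hf0]
        linear_combination hf1
      · exact hf x h hx
  have hI : ∀ k, k < k0 → Interior n0 A B z (fun j => f (k * n0 + j)) := by
    intro k hk j hj hj'
    have h3 : k * n0 + n0 ≤ k0 * n0 := by
      rw [← Nat.succ_mul]; exact Nat.mul_le_mul_right _ hk
    have h4 := hf (k * n0 + j) (by omega) (by omega)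
    have h5 : (k * n0 + j) % n0 = j := by
      rw [Nat.add_comm, Nat.add_mul_mod_self_right, Nat.mod_eq_of_lt hj']
    rw [hL, hS] at h4
    simp only [h5] at h4
    rw [if_neg (by omega), if_neg (by omega), show k * n0 + j - 1 = k * n0 + (j - 1) by omega] at h4
    exact h4
  have hcore := core_s14 n0 k0 hn0 hk0 (φ n0) (ψ n0) e t z (A 1) (B 0) p hp0 hpk0 hp hA1 h1 h2
    (fun k => f (k * n0)) (fun k => A 1 * f (k * n0 + 1) + (B 0 - z) * f (k * n0))
    (fun k => A 1 * f (k * n0 - 1) + (B 0 - z) * f (k * n0)) (by simp [hf0])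
    (by simp only [Nat.zero_mul, Nat.zero_add, hf0]; linear_combination hf1)
    (by
      intro k hk
      have := ex _ (hI k hk) n0 le_rfl
      simp only [Nat.add_zero] at this
      simp only [Nat.succ_mul]
      linear_combination this)
    (by
      intro k hk
      have h3 := ex _ (hI k hk) n0 le_rfl
      have h4 := ex _ (hI k hk) (n0 - 1) (by omega)
      simp only [Nat.add_zero] at h3 h4
      simp only [Nat.succ_mul]
      rw [show k * n0 + n0 - 1 = k * n0 + (n0 - 1) by omega, h3, h4, he, ht]
      ring)
    (by
      intro k hk hk'
      have h3 : k * n0 < k0 * n0 := Nat.mul_lt_mul_of_pos_right hk' hnpos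
      have h4 := hf (k * n0) (Nat.mul_pos hk hnpos) h3
      rw [hLk, hSk, Nat.mul_mod_left] at h4
      linear_combination h4)
  rw [hJ, Set.mem_union, Set.mem_setOf_eq, hc, hcs]
  exact hcore
end

section
/- For every z, 2^{k0−1}·Q_{k0}(z) = T_{k0}(z−1), where T_{k0} is the Chebyshev polynomial of the first kind of degree k0; equivalently, the spectral decimation function of the (k0+1)×(k0+1) standard probabilistic path Laplacian is R(z) = 1 − (−1)^{k0}·T_{k0}(z−1). -/
open Polynomial

/-- For the polynomial `Q_{k0}` associated with the standard
probabilistic path Laplacian, `2^{k0−1} · Q_{k0}(z) = T_{k0}(z − 1)` where `T_{k0}` is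
the Chebyshev polynomial of the first kind of degree `k0`; equivalently, the spectral
decimation function `R(z) = 1 − Q_{k0}(z) / ((−1)^{k0}·2^{−(k0−1)})` equals
`1 − (−1)^{k0}·T_{k0}(z − 1)`. -/
theorem statement_15 (k0 : ℕ) (hk0 : 2 ≤ k0)
    (Q : ℕ → Polynomial ℝ)
    (hQ0 : Q 0 = 1) (hQ1 : Q 1 = X - 1)
    (hQ2 : Q 2 = (X - 1) * Q 1 - C (1 / 2) * Q 0)
    (hQ : ∀ k, 3 ≤ k → k ≤ k0 → Q k = (X - 1) * Q (k - 1) - C (1 / 4) * Q (k - 2)) :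
    (∀ z : ℝ, 2 ^ (k0 - 1) * (Q k0).eval z =
      (Polynomial.Chebyshev.T ℝ (k0 : ℤ)).eval (z - 1)) ∧
    (∀ z : ℝ, 1 - (Q k0).eval z / ((-1 : ℝ) ^ k0 * ((2 : ℝ) ^ (k0 - 1))⁻¹) =
      1 - (-1 : ℝ) ^ k0 * (Polynomial.Chebyshev.T ℝ (k0 : ℤ)).eval (z - 1)) := by
  have key : ∀ n : ℕ, n + 2 ≤ k0 → ∀ z : ℝ,
      2 ^ n * (Q (n + 1)).eval z = (Polynomial.Chebyshev.T ℝ ((n : ℤ) + 1)).eval (z - 1) ∧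
      2 ^ (n + 1) * (Q (n + 2)).eval z =
        (Polynomial.Chebyshev.T ℝ ((n : ℤ) + 2)).eval (z - 1) := by
    intro n
    induction n with
    | zero =>
      intro _ z
      constructor
      · simp [hQ1]
      · simp [hQ2, hQ1, hQ0, Polynomial.Chebyshev.T_two]
        ring
    | succ n ih =>
      intro hn z
      obtain ⟨h1, h2⟩ := ih (by omega) z
      have e : (((n + 1 : ℕ) : ℤ) + 1) = (n : ℤ) + 2 := by push_cast; ring
      refine ⟨?_, ?_⟩
      · rw [e]
        exact h2
      · have hr := hQ (n + 1 + 2) (by omega) hn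
        have e1 : n + 1 + 2 - 1 = n + 2 := by omega
        have e2 : n + 1 + 2 - 2 = n + 1 := by omega
        rw [e1, e2] at hr
        have e3 : (((n + 1 : ℕ) : ℤ) + 2) = ((n : ℤ) + 1) + 2 := by push_cast; ring
        have e4 : ((n : ℤ) + 1) + 1 = (n : ℤ) + 2 := by ring
        rw [hr, e3, Polynomial.Chebyshev.T_add_two, e4]
        simp only [eval_sub, eval_mul, eval_X, eval_C, eval_one, eval_ofNat]
        rw [← h1, ← h2]
        ring
  have main : ∀ z : ℝ, 2 ^ (k0 - 1) * (Q k0).eval z =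
      (Polynomial.Chebyshev.T ℝ (k0 : ℤ)).eval (z - 1) := by
    intro z
    obtain ⟨m, rfl⟩ : ∃ m, k0 = m + 2 := ⟨k0 - 2, by omega⟩
    have h := (key m le_rfl z).2
    have e : m + 2 - 1 = m + 1 := by omega
    rw [e, h]
    push_cast
    rfl
  refine ⟨main, fun z => ?_⟩
  rw [← main z]
  have hs : ((-1 : ℝ) ^ k0)⁻¹ = (-1) ^ k0 := by
    rw [← inv_pow]; norm_num
  rw [div_eq_mul_inv, mul_inv, inv_inv, hs]
  ring
end

section
/- The spectrum over ℂ of Δ equals {0, 1−√(1−p), 1, 1+√(1−p), 2}, and the spectrum over ℂ of Δ^D equals {1−√p, 1, 1+√p}, where √ denotes the real square root. -/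
theorem aux_det5 (z p : ℂ) :
    (!![z - 1, 1, 0, 0, 0;
        1 - p, z - 1, p, 0, 0;
        0, 1/2, z - 1, 1/2, 0;
        0, 0, p, z - 1, 1 - p;
        0, 0, 0, 1, z - 1] : Matrix (Fin 5) (Fin 5) ℂ).det =
      (z - 1) * (z * (z - 2)) * ((z - 1) ^ 2 - (1 - p)) := by
  simp [Matrix.det_succ_row_zero, Fin.sum_univ_succ, Fin.succAbove]
  ring

theorem aux_det3 (z p : ℂ) :
    (!![z - 1, p, 0; 1/2, z - 1, 1/2; 0, p, z - 1] : Matrix (Fin 3) (Fin 3) ℂ).det =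
      (z - 1) * ((z - 1) ^ 2 - p) := by
  rw [Matrix.det_fin_three]
  simp
  ring

/-- For the 5×5 centrosymmetric probabilistic path Laplacian `Δ` with
transition probabilities `1, p, 1/2, 1−p, 0` and its Dirichlet restriction `Δ^D`, the
spectrum of `Δ` over `ℂ` is `{0, 1−√(1−p), 1, 1+√(1−p), 2}` and the spectrum of `Δ^D`
over `ℂ` is `{1−√p, 1, 1+√p}`. -/
theorem statement_17 (p : ℝ) (hp0 : 0 < p) (hp1 : p < 1) :
    spectrum ℂ
        ((!![1, -1, 0, 0, 0;
             p - 1, 1, -p, 0, 0;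
             0, -1/2, 1, -1/2, 0;
             0, 0, -p, 1, p - 1;
             0, 0, 0, -1, 1] : Matrix (Fin 5) (Fin 5) ℝ).map Complex.ofReal) =
      {(0 : ℂ), ((1 - Real.sqrt (1 - p) : ℝ) : ℂ), (1 : ℂ),
        ((1 + Real.sqrt (1 - p) : ℝ) : ℂ), (2 : ℂ)} ∧
    spectrum ℂ
        ((!![1, -p, 0;
             -1/2, 1, -1/2;
             0, -p, 1] : Matrix (Fin 3) (Fin 3) ℝ).map Complex.ofReal) =
      {((1 - Real.sqrt p : ℝ) : ℂ), (1 : ℂ), ((1 + Real.sqrt p : ℝ) : ℂ)} := by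
  have h1 : ((Real.sqrt (1 - p) : ℝ) : ℂ) ^ 2 = 1 - (p : ℂ) := by
    have := Real.sq_sqrt (show (0 : ℝ) ≤ 1 - p by linarith)
    exact_mod_cast congrArg Complex.ofReal this
  have h2 : ((Real.sqrt p : ℝ) : ℂ) ^ 2 = (p : ℂ) := by
    have := Real.sq_sqrt hp0.le
    exact_mod_cast congrArg Complex.ofReal this
  constructor
  · ext z
    rw [spectrum.mem_iff, Matrix.isUnit_iff_isUnit_det, isUnit_iff_ne_zero, not_not]
    have e := aux_det5 z p
    have e' : (z - 1) * (z * (z - 2)) * ((z - 1) ^ 2 - (1 - (p : ℂ))) =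
      (z - 0) * ((z - (1 - (Real.sqrt (1 - p) : ℝ))) * ((z - 1) *
        ((z - (1 + (Real.sqrt (1 - p) : ℝ))) * (z - 2)))) := by
      rw [← h1]; ring
    rw [e'] at e
    convert Iff.of_eq (congrArg (· = 0) e) using 2
    · congr 1
      ext i j
      fin_cases i <;> fin_cases j <;> simp [Matrix.algebraMap_matrix_apply] <;> ring
    · simp only [mul_eq_zero, sub_eq_zero, Set.mem_insert_iff, Set.mem_singleton_iff,
        Complex.ofReal_sub, Complex.ofReal_add, Complex.ofReal_one]
  · ext z
    rw [spectrum.mem_iff, Matrix.isUnit_iff_isUnit_det, isUnit_iff_ne_zero, not_not]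
    have e := aux_det3 z p
    have e' : (z - 1) * ((z - 1) ^ 2 - (p : ℂ)) =
      (z - (1 - (Real.sqrt p : ℝ))) * ((z - 1) * (z - (1 + (Real.sqrt p : ℝ)))) := by
      rw [← h2]; ring
    rw [e'] at e
    convert Iff.of_eq (congrArg (· = 0) e) using 2
    · congr 1
      ext i j
      fin_cases i <;> fin_cases j <;> simp [Matrix.algebraMap_matrix_apply] <;> ring
    · simp only [mul_eq_zero, sub_eq_zero, Set.mem_insert_iff, Set.mem_singleton_iff,
        Complex.ofReal_sub, Complex.ofReal_add, Complex.ofReal_one]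
end

section
/- For the rational function R(z) = 2z(2−z)(z−1)²/(p(1−p)) on ℂ, the solution set of R(z) = 0 is exactly {0, 1, 2}, and the solution set of R(z) = 2 is exactly {1−√(1−p), 1−√p, 1+√p, 1+√(1−p)}, where √ denotes the real square root. -/
/-- For the rational function `R(z) = 2z(2−z)(z−1)²/(p(1−p))` on `ℂ`
(the spectral decimation function of the 5×5 centrosymmetric probabilistic path
Laplacian with transition probabilities `1, p, 1/2, 1−p, 0`), the solution set of
`R(z) = 0` is exactly `{0, 1, 2}` and the solution set of `R(z) = 2` is exactly
`{1−√(1−p), 1−√p, 1+√p, 1+√(1−p)}`. -/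
theorem statement_18 (p : ℝ) (hp0 : 0 < p) (hp1 : p < 1) :
    {z : ℂ | 2 * z * (2 - z) * (z - 1) ^ 2 / ((p : ℂ) * (1 - (p : ℂ))) = 0} =
      {(0 : ℂ), (1 : ℂ), (2 : ℂ)} ∧
    {z : ℂ | 2 * z * (2 - z) * (z - 1) ^ 2 / ((p : ℂ) * (1 - (p : ℂ))) = 2} =
      {((1 - Real.sqrt (1 - p) : ℝ) : ℂ), ((1 - Real.sqrt p : ℝ) : ℂ),
        ((1 + Real.sqrt p : ℝ) : ℂ), ((1 + Real.sqrt (1 - p) : ℝ) : ℂ)} := by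
  have ha : ((Real.sqrt p : ℝ) : ℂ) ^ 2 = (p : ℂ) := by
    rw [← Complex.ofReal_pow, Real.sq_sqrt hp0.le]
  have hb : ((Real.sqrt (1 - p) : ℝ) : ℂ) ^ 2 = 1 - (p : ℂ) := by
    rw [← Complex.ofReal_pow, Real.sq_sqrt (by linarith)]
    push_cast
    rfl
  have h0 : (p : ℂ) ≠ 0 := by exact_mod_cast hp0.ne'
  have h1 : 1 - (p : ℂ) ≠ 0 := by
    have : (1 - p : ℝ) ≠ 0 := by linarith
    exact_mod_cast this
  have hd : (p : ℂ) * (1 - (p : ℂ)) ≠ 0 := mul_ne_zero h0 h1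
  constructor
  · ext z
    simp only [Set.mem_setOf_eq, Set.mem_insert_iff, Set.mem_singleton_iff]
    rw [div_eq_zero_iff, or_iff_left hd]
    constructor
    · intro h
      have h' : z * ((z - 2) * (z - 1) ^ 2) = 0 := by linear_combination (-1 / 2) * h
      rcases mul_eq_zero.1 h' with h | h
      · exact Or.inl h
      rcases mul_eq_zero.1 h with h | h
      · exact Or.inr (Or.inr (sub_eq_zero.1 h))
      · exact Or.inr (Or.inl (sub_eq_zero.1 (pow_eq_zero_iff two_ne_zero |>.1 h)))
    · rintro (rfl | rfl | rfl) <;> norm_num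
  · ext z
    simp only [Set.mem_setOf_eq, Set.mem_insert_iff, Set.mem_singleton_iff]
    rw [div_eq_iff hd, Complex.ofReal_sub, Complex.ofReal_sub, Complex.ofReal_add,
      Complex.ofReal_add, Complex.ofReal_one]
    generalize ((Real.sqrt p : ℝ) : ℂ) = a at *
    generalize ((Real.sqrt (1 - p) : ℝ) : ℂ) = b at *
    have key : 2 * z * (2 - z) * (z - 1) ^ 2 - 2 * ((p : ℂ) * (1 - (p : ℂ))) =
        -2 * ((z - (1 - b)) * ((z - (1 - a)) * ((z - (1 + a)) * (z - (1 + b))))) := by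
      have e : (z - (1 - b)) * ((z - (1 - a)) * ((z - (1 + a)) * (z - (1 + b)))) =
        ((z - 1) ^ 2 - a ^ 2) * ((z - 1) ^ 2 - b ^ 2) := by ring
      rw [e, ha, hb]
      ring
    rw [← sub_eq_zero, key]
    simp [sub_eq_zero]
end
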